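/- Under the hypotheses of the regime switching asymptotic theorem (|A| < ∞, underlying irreducible aperiodic Markov chain with stationary distribution π, P ∈ RV_α(C, ℓ) with α ∈ (0,1)), for all r ≥ 0: lim_{n→∞} P_η{𝓛_n = r} / E_η[ 1{L_n > r} L_n^{−(1−α)} ℓ(L_n) ] = ( Σ_{a∈A} π_a^α C(a) αΓ(r+1−α)/r! ) / ( Σ_{a∈A} π_a^α ). -/

import Mathlib

open MeasureTheory ENNReal Finset Filter

/-- `t`-step transition matrix of a kernel `Q` on a finite set. -/
noncomputable def mpow {A : Type*} [Fintype A] [DecidableEq A] (Q : A → A → ℝ) :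
    ℕ → A → A → ℝ
  | 0 => fun x y => if x = y then 1 else 0
  | (t + 1) => fun x y => ∑ z, Q x z * mpow Q t z y

/-- `ℓ` is slowly varying at `+∞`: `ℓ(cx)/ℓ(x) → 1` for every `c > 0`. -/
def SlowlyVarying (ℓ : ℝ → ℝ) : Prop :=
  ∀ c : ℝ, 0 < c → Tendsto (fun x => ℓ (c * x) / ℓ x) atTop (nhds 1)

open scoped Classical in
/-- The (real-valued) counting function `ν(a,ε) = Σ_k 1{p_{a,k} ≥ ε}`. -/
noncomputable def nuR {A : Type*} (p : A → ℕ → ℝ) (a : A) (ε : ℝ) : ℝ :=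
  ∑' k, if ε ≤ p a k then (1 : ℝ) else 0

/-!
Given the trajectory of the regimes the marks are independent, so `𝓛_n` is a mixture of binomial
variables with `L_n` trials and success probabilities `p_{a,k}`, where `a` is the regime at time
`n`. Its probability of being `r` is therefore the expectation of `g_a(L_n)`, where
`g_a(m) = Σ_k p_{a,k} · C(m,r) p_{a,k}^r (1 - p_{a,k})^{m-r}`. By the layer cake formula `g_a(m)` is
an integral of Bernstein polynomials against `ν(a, ·)`, and a Karlin-type Abelian argument
(substitute `u = y / m`, so that Bernstein polynomials become Poisson weights) gives its asymptotics
in terms of `U(m) / m`, where `U(x) = ν(a₀, 1/x)` for one regime with `C(a₀) ≠ 0`. The summand of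
the denominator is comparable to `U(m) / m` too.

The occupation counts concentrate: the Poisson equation `h - Qh = 1_a - π_a` turns them into a
martingale with bounded increments, so their variance is `O(n)`, and on `{X_n = a}` one may replace
`L_n` by `π_a n`; the error is negligible because `U(n) → ∞`.

Normalising by the monotone function `U` in place of `x^α ℓ(x)` makes up for the uniform convergence
theorem of regular variation, which can fail for a non-measurable `ℓ`.
-/

section StochasticMatrices

open Matrix Topology

lemma exists_pos_forall_mul_le {A : Type*} [Finite A] {Q : A → A → ℝ} (hQ : ∀ x y, 0 < Q x y)
    (π : A → ℝ) : ∃ δ > 0, ∀ x y, δ * π y ≤ Q x y := by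
  have hlim : ∀ x y, ∀ᶠ δ : ℝ in 𝓝[>] 0, δ * π y ≤ Q x y := fun x y => by
    have : Tendsto (fun δ : ℝ => δ * π y) (𝓝[>] 0) (𝓝 (0 * π y)) :=
      tendsto_nhdsWithin_of_tendsto_nhds (tendsto_id.mul_const _)
    rw [zero_mul] at this
    exact this.eventually_le_const (hQ x y)
  exact ((eventually_all.2 fun x => eventually_all.2 (hlim x)).and
    self_mem_nhdsWithin).exists.imp fun δ hδ => hδ.symm

variable {A : Type*} [Fintype A]

lemma norm_mulVec_le_of_row_sum_le [Nonempty A] {M : Matrix A A ℝ} {s : ℝ}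
    (hM : ∀ x y, 0 ≤ M x y) (hs : ∀ x, ∑ y, M x y ≤ s) (f : A → ℝ) : ‖M *ᵥ f‖ ≤ s * ‖f‖ := by
  refine (pi_norm_le_iff_of_nonempty _).2 fun x => ?_
  calc ‖∑ y, M x y * f y‖ ≤ ∑ y, M x y * ‖f‖ := norm_sum_le_of_le _ fun y _ => by
        rw [norm_mul, Real.norm_of_nonneg (hM x y)]
        exact mul_le_mul_of_nonneg_left (norm_le_pi_norm f y) (hM x y)
    _ = (∑ y, M x y) * ‖f‖ := (sum_mul ..).symm
    _ ≤ s * ‖f‖ := by gcongr; exact hs x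

variable [DecidableEq A] {Q : Matrix A A ℝ} {π : A → ℝ}

lemma norm_mulVec_le_of_mem_rowStochastic [Nonempty A] (hQ : Q ∈ rowStochastic ℝ A) (f : A → ℝ) :
    ‖Q *ᵥ f‖ ≤ ‖f‖ := by
  simpa using norm_mulVec_le_of_row_sum_le (fun _ _ => nonneg_of_mem_rowStochastic hQ)
    (fun x => (sum_row_of_mem_rowStochastic hQ x).le) f

-- Doeblin: on mean-zero functions `Q` acts as `Q - δ 1 ⊗ π`, whose row sums are `1 - δ`.
lemma norm_mulVec_le_of_minorization [Nonempty A] (hQ : Q ∈ rowStochastic ℝ A)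
    (hπ : ∑ x, π x = 1) {δ : ℝ} (hδ : ∀ x y, δ * π y ≤ Q x y) {f : A → ℝ} (hf : π ⬝ᵥ f = 0) :
    ‖Q *ᵥ f‖ ≤ (1 - δ) * ‖f‖ := by
  have hQf : Q *ᵥ f = Matrix.of (fun x y => Q x y - δ * π y) *ᵥ f := by
    ext x
    have : ∑ y, δ * π y * f y = 0 := by
      simpa [dotProduct, mul_sum, mul_assoc] using congrArg (δ * ·) hf
    simp [mulVec, dotProduct, sub_mul, this]
  rw [hQf]
  refine norm_mulVec_le_of_row_sum_le (fun x y => sub_nonneg.2 (hδ x y)) (fun x => le_of_eq ?_) f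
  simp [← mul_sum, hπ, sum_row_of_mem_rowStochastic hQ x]

lemma vecMul_pow_of_stationary (hstat : π ᵥ* Q = π) (n : ℕ) : π ᵥ* Q ^ n = π := by
  induction n with
  | zero => simp
  | succ n ih => rw [pow_succ, ← vecMul_vecMul, ih, hstat]

lemma norm_pow_mulVec_le_of_minorization [Nonempty A] (hQ : Q ∈ rowStochastic ℝ A)
    (hπ : ∑ x, π x = 1) (hstat : π ᵥ* Q = π) {δ : ℝ} (hδ : ∀ x y, δ * π y ≤ Q x y)
    (hδ1 : δ ≤ 1) {f : A → ℝ} (hf : π ⬝ᵥ f = 0) (n : ℕ) :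
    ‖Q ^ n *ᵥ f‖ ≤ (1 - δ) ^ n * ‖f‖ := by
  induction n with
  | zero => simp
  | succ n ih =>
    have hmean : π ⬝ᵥ (Q ^ n *ᵥ f) = 0 := by
      rw [dotProduct_mulVec, vecMul_pow_of_stationary hstat, hf]
    calc ‖Q ^ (n + 1) *ᵥ f‖ = ‖Q *ᵥ (Q ^ n *ᵥ f)‖ := by rw [mulVec_mulVec, ← pow_succ']
      _ ≤ (1 - δ) * ‖Q ^ n *ᵥ f‖ := norm_mulVec_le_of_minorization hQ hπ hδ hmean
      _ ≤ (1 - δ) * ((1 - δ) ^ n * ‖f‖) := by gcongr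
      _ = (1 - δ) ^ (n + 1) * ‖f‖ := by ring

lemma le_one_of_minorization [Nonempty A] (hQ : Q ∈ rowStochastic ℝ A) (hπ : ∑ x, π x = 1) {δ : ℝ}
    (hδ : ∀ x y, δ * π y ≤ Q x y) : δ ≤ 1 := by
  let x := Classical.arbitrary A
  calc δ = ∑ y, δ * π y := by rw [← mul_sum, hπ, mul_one]
    _ ≤ ∑ y, Q x y := sum_le_sum fun y _ => hδ x y
    _ = 1 := sum_row_of_mem_rowStochastic hQ x

lemma tendsto_pow_mulVec_zero [Nonempty A] (hQ : Q ∈ rowStochastic ℝ A) (hprim : Q.IsPrimitive)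
    (hπ : ∑ x, π x = 1) (hstat : π ᵥ* Q = π) {f : A → ℝ} (hf : π ⬝ᵥ f = 0) :
    Tendsto (fun n => Q ^ n *ᵥ f) atTop (𝓝 0) := by
  obtain ⟨k, hk, hQk⟩ := hprim.2
  obtain ⟨δ, hδ, hmin⟩ := exists_pos_forall_mul_le hQk π
  have hδ1 := le_one_of_minorization (pow_mem hQ k) hπ hmin
  have hbound : ∀ n, ‖Q ^ n *ᵥ f‖ ≤ (1 - δ) ^ (n / k) * ‖f‖ := fun n => by
    calc ‖Q ^ n *ᵥ f‖ = ‖Q ^ (n % k) *ᵥ ((Q ^ k) ^ (n / k) *ᵥ f)‖ := by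
          rw [mulVec_mulVec, ← pow_mul, ← pow_add, Nat.mod_add_div]
      _ ≤ ‖(Q ^ k) ^ (n / k) *ᵥ f‖ := norm_mulVec_le_of_mem_rowStochastic (pow_mem hQ _) _
      _ ≤ (1 - δ) ^ (n / k) * ‖f‖ := norm_pow_mulVec_le_of_minorization (pow_mem hQ k) hπ
          (vecMul_pow_of_stationary hstat k) hmin hδ1 hf _
  refine squeeze_zero_norm hbound ?_
  simpa using ((tendsto_pow_atTop_nhds_zero_of_lt_one (sub_nonneg.2 hδ1)
    (sub_lt_self 1 hδ)).comp (Nat.tendsto_div_const_atTop hk.ne')).mul_const ‖f‖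

theorem tendsto_pow_mulVec [Nonempty A] (hQ : Q ∈ rowStochastic ℝ A) (hprim : Q.IsPrimitive)
    (hπ : ∑ x, π x = 1) (hstat : π ᵥ* Q = π) (f : A → ℝ) :
    Tendsto (fun n => Q ^ n *ᵥ f) atTop (𝓝 fun _ => π ⬝ᵥ f) := by
  have hmean : π ⬝ᵥ (f - fun _ => π ⬝ᵥ f) = 0 := by
    rw [dotProduct_sub, sub_eq_zero]
    simp [dotProduct, ← sum_mul, hπ]
  have hconst : ∀ n, Q ^ n *ᵥ (fun _ => π ⬝ᵥ f) = fun _ => π ⬝ᵥ f := fun n => by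
    ext x
    simp [mulVec, dotProduct, ← sum_mul, sum_row_of_mem_rowStochastic (pow_mem hQ n) x]
  simpa [mulVec_sub, hconst] using
    (tendsto_pow_mulVec_zero hQ hprim hπ hstat hmean).add_const (fun _ => π ⬝ᵥ f)

lemma eq_zero_of_mulVec_eq_self [Nonempty A] (hQ : Q ∈ rowStochastic ℝ A) (hprim : Q.IsPrimitive)
    (hπ : ∑ x, π x = 1) (hstat : π ᵥ* Q = π) {h : A → ℝ} (hh : π ⬝ᵥ h = 0) (hfix : Q *ᵥ h = h) :
    h = 0 := by
  have hpow : ∀ n, Q ^ n *ᵥ h = h := fun n => by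
    induction n with
    | zero => simp
    | succ n ih => rw [pow_succ, ← mulVec_mulVec, hfix, ih]
  exact tendsto_nhds_unique tendsto_const_nhds
    (by simpa only [hpow] using tendsto_pow_mulVec_zero hQ hprim hπ hstat hh)

-- The Poisson equation of the chain, solved through the invertible matrix `1 - Q + 1 ⊗ π`.
theorem exists_sub_mulVec_eq [Nonempty A] (hQ : Q ∈ rowStochastic ℝ A) (hprim : Q.IsPrimitive)
    (hπ : ∑ x, π x = 1) (hstat : π ᵥ* Q = π) {f : A → ℝ} (hf : π ⬝ᵥ f = 0) :
    ∃ h, h - Q *ᵥ h = f := by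
  have hmean : ∀ h, π ⬝ᵥ (h - Q *ᵥ h) = 0 := fun h => by
    rw [dotProduct_sub, dotProduct_mulVec, hstat, sub_self]
  have hmul : ∀ h, (1 - Q + vecMulVec 1 π) *ᵥ h = (h - Q *ᵥ h) + fun _ => π ⬝ᵥ h := fun h => by
    rw [add_mulVec, sub_mulVec, one_mulVec]
    ext x
    simp [mulVec, dotProduct]
  have hdot : ∀ h, π ⬝ᵥ ((1 - Q + vecMulVec 1 π) *ᵥ h) = π ⬝ᵥ h := fun h => by
    rw [hmul, dotProduct_add, hmean, zero_add]
    simp [dotProduct, ← sum_mul, hπ]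
  have hinj : Function.Injective (1 - Q + vecMulVec 1 π).mulVec := by
    refine (injective_iff_map_eq_zero (1 - Q + vecMulVec 1 π).mulVecLin).2 fun h hh => ?_
    replace hh : (1 - Q + vecMulVec 1 π) *ᵥ h = 0 := hh
    have hh0 : π ⬝ᵥ h = 0 := by rw [← hdot, hh, dotProduct_zero]
    have hfix : Q *ᵥ h = h := by
      rw [hmul, hh0, ← Pi.zero_def, add_zero] at hh
      exact (sub_eq_zero.1 hh).symm
    exact eq_zero_of_mulVec_eq_self hQ hprim hπ hstat hh0 hfix
  obtain ⟨h, hh⟩ := mulVec_surjective_iff_isUnit.2 (mulVec_injective_iff_isUnit.1 hinj) f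
  refine ⟨h, ?_⟩
  have hh0 : π ⬝ᵥ h = 0 := by rw [← hdot, hh, hf]
  rw [← hh, hmul, hh0]
  exact (add_zero _).symm

lemma mpow_eq_pow (t : ℕ) : mpow Q t = Q ^ t := by
  induction t with
  | zero => exact funext₂ fun x y => (one_apply (i := x) (j := y)).symm
  | succ t ih =>
    rw [pow_succ', ← ih]
    rfl

lemma isPrimitive_of_mpow_pos (hQ : Q ∈ rowStochastic ℝ A) {t : ℕ}
    (ht : ∀ a b, 0 < mpow Q t a b) : Q.IsPrimitive := by
  refine ⟨fun _ _ => nonneg_of_mem_rowStochastic hQ, t + 1, t.succ_pos, fun a b => ?_⟩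
  obtain ⟨z, -, hz⟩ := exists_lt_of_sum_lt (f := fun _ => (0 : ℝ)) (s := univ) (g := Q a)
    (by simp [sum_row_of_mem_rowStochastic hQ a])
  rw [pow_succ', mul_apply, ← mpow_eq_pow]
  exact sum_pos' (fun y _ => mul_nonneg (nonneg_of_mem_rowStochastic hQ) (ht y b).le)
    ⟨z, mem_univ z, mul_pos hz (ht z b)⟩

end StochasticMatrices

section CountableLaws

open ProbabilityTheory

variable {Ω S : Type*} [MeasurableSpace Ω] {P : Measure Ω}

lemma nullMeasurableSet_of_measure_add_measure_compl_le [IsFiniteMeasure P] {s : Set Ω}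
    (h : P s + P sᶜ ≤ P Set.univ) : NullMeasurableSet s P := by
  have hinter : P (toMeasurable P s ∩ toMeasurable P sᶜ) = 0 := by
    have hcover : toMeasurable P s ∪ toMeasurable P sᶜ = Set.univ :=
      Set.univ_subset_iff.1 ((Set.union_compl_self s).symm.subset.trans
        (Set.union_subset_union (subset_toMeasurable _ _) (subset_toMeasurable _ _)))
    have hadd := measure_union_add_inter (μ := P) (toMeasurable P s)
      (measurableSet_toMeasurable P sᶜ)
    rw [hcover, measure_toMeasurable, measure_toMeasurable] at hadd
    have : P Set.univ + P (toMeasurable P s ∩ toMeasurable P sᶜ) ≤ P Set.univ + 0 := by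
      rw [hadd, add_zero]; exact h
    exact le_antisymm ((ENNReal.add_le_add_iff_left (measure_ne_top P _)).1 this) zero_le
  refine ⟨toMeasurable P s, measurableSet_toMeasurable _ _,
    (subset_toMeasurable P s).eventuallyLE.antisymm (ae_le_set.2 (measure_mono_null ?_ hinter))⟩
  exact fun ω hω => ⟨hω.1, subset_toMeasurable P sᶜ hω.2⟩

variable [MeasurableSpace S] [Countable S] [MeasurableSingletonClass S] {M : Measure S} {Y : Ω → S}

lemma measure_preimage_le_of_singleton (h : ∀ s, P (Y ⁻¹' {s}) = M {s}) (t : Set S) :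
    P (Y ⁻¹' t) ≤ M t := by
  calc P (Y ⁻¹' t) = P (⋃ s ∈ t, Y ⁻¹' {s}) := by rw [Set.biUnion_preimage_singleton]
    _ ≤ ∑' s : t, P (Y ⁻¹' {(s : S)}) := measure_biUnion_le P t.to_countable _
    _ = ∑' s : t, M {(s : S)} := tsum_congr fun s => h s
    _ = M t := by
      rw [← measure_biUnion t.to_countable (fun _ _ _ _ hne => by simpa using hne)
        fun s _ => measurableSet_singleton s, Set.biUnion_of_singleton]

theorem hasLaw_of_measure_preimage_singleton [IsFiniteMeasure P] (h : ∀ s, P (Y ⁻¹' {s}) = M {s})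
    (huniv : M Set.univ = P Set.univ) : HasLaw Y M P := by
  have hnull : ∀ t, NullMeasurableSet (Y ⁻¹' t) P := fun t => by
    refine nullMeasurableSet_of_measure_add_measure_compl_le ?_
    rw [← Set.preimage_compl, ← huniv,
      ← measure_add_measure_compl (μ := M) t.to_countable.measurableSet]
    exact add_le_add (measure_preimage_le_of_singleton h t) (measure_preimage_le_of_singleton h tᶜ)
  have hY : AEMeasurable Y P := NullMeasurable.aemeasurable fun t _ => hnull t
  refine ⟨hY, Measure.ext_of_singleton fun s => ?_⟩
  rw [Measure.map_apply_of_aemeasurable hY (measurableSet_singleton s), h]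

end CountableLaws

section MarkovChain

open ProbabilityTheory Matrix Topology

variable {A : Type*}

/-- The probability that a Markov chain with initial distribution `η` and transition matrix `Q`
starts with the trajectory `x₀, …, xₙ`. -/
def pathWeight (Q : Matrix A A ℝ) (η : A → ℝ) (n : ℕ) (x : Fin (n + 1) → A) : ℝ :=
  η (x 0) * ∏ i : Fin n, Q (x i.castSucc) (x i.succ)

variable {Q : Matrix A A ℝ} {η : A → ℝ}

lemma pathWeight_snoc (n : ℕ) (x : Fin (n + 1) → A) (y : A) :
    pathWeight Q η (n + 1) (Fin.snoc x y : Fin (n + 2) → A) =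
      pathWeight Q η n x * Q (x (Fin.last n)) y := by
  have h0 : (Fin.snoc x y : Fin (n + 2) → A) 0 = x 0 := Fin.snoc_castSucc (α := fun _ => A) y x 0
  have hlast : (Fin.snoc x y : Fin (n + 2) → A) (Fin.last n).succ = y := by
    rw [Fin.succ_last, Fin.snoc_last]
  simp only [pathWeight, h0, Fin.prod_univ_castSucc, hlast, Fin.snoc_castSucc, ← Fin.castSucc_succ,
    mul_assoc]

variable [Fintype A]

/-- The law of the first `n + 1` states of a Markov chain with initial distribution `η` and
transition matrix `Q`. -/
noncomputable def pathMeasure [MeasurableSpace A] (Q : Matrix A A ℝ) (η : A → ℝ) (n : ℕ) :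
    Measure (Fin (n + 1) → A) :=
  ∑ x, ENNReal.ofReal (pathWeight Q η n x) • Measure.dirac x

/-- `X` is a Markov chain under `P` with initial distribution `η` and transition matrix `Q`,
expressed through its finite-dimensional distributions. -/
def IsMarkovChain [MeasurableSpace A] {Ω : Type*} [MeasurableSpace Ω] (P : Measure Ω)
    (X : ℕ → Ω → A) (Q : Matrix A A ℝ) (η : A → ℝ) : Prop :=
  ∀ n, HasLaw (fun ω (i : Fin (n + 1)) => X i ω) (pathMeasure Q η n) P

lemma sum_fin_snoc {M : Type*} [AddCommMonoid M] (n : ℕ) (F : (Fin (n + 1) → A) → M) :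
    ∑ x, F x = ∑ x : Fin n → A, ∑ y, F (Fin.snoc x y) := by
  rw [← (Fin.snocEquiv fun _ : Fin (n + 1) => A).sum_comp, Fintype.sum_prod_type_right]
  rfl

namespace IsMarkovChain

variable [MeasurableSpace A] {Ω : Type*} [MeasurableSpace Ω] {P : Measure Ω} {X : ℕ → Ω → A}

lemma aemeasurable (hX : IsMarkovChain P X Q η) (n : ℕ) : AEMeasurable (X n) P :=
  (measurable_pi_apply (Fin.last n)).comp_aemeasurable (hX n).aemeasurable

lemma integrable_comp_path [MeasurableSingletonClass A] [IsFiniteMeasure P]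
    (hX : IsMarkovChain P X Q η) (n : ℕ) (F : (Fin (n + 1) → A) → ℝ) :
    Integrable (fun ω => F (fun i => X i ω)) P :=
  (Integrable.of_finite (μ := P.map _)).comp_aemeasurable (hX n).aemeasurable

end IsMarkovChain

variable [DecidableEq A]

lemma pathWeight_nonneg (hQ : Q ∈ rowStochastic ℝ A) (hη : η ∈ stdSimplex ℝ A) (n : ℕ)
    (x : Fin (n + 1) → A) : 0 ≤ pathWeight Q η n x :=
  mul_nonneg (hη.1 _) (prod_nonneg fun _ _ => nonneg_of_mem_rowStochastic hQ)

lemma sum_pathWeight (hQ : Q ∈ rowStochastic ℝ A) (hη : η ∈ stdSimplex ℝ A) (n : ℕ) :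
    ∑ x, pathWeight Q η n x = 1 := by
  induction n with
  | zero =>
    rw [← (Equiv.funUnique (Fin 1) A).symm.sum_comp]
    simpa [pathWeight] using hη.2
  | succ n ih =>
    simp only [sum_fin_snoc (n + 1), pathWeight_snoc, ← mul_sum, sum_row_of_mem_rowStochastic hQ,
      mul_one, ih]

lemma integral_pathMeasure [MeasurableSpace A] [MeasurableSingletonClass A]
    (hQ : Q ∈ rowStochastic ℝ A) (hη : η ∈ stdSimplex ℝ A) (n : ℕ)
    (F : (Fin (n + 1) → A) → ℝ) :
    ∫ x, F x ∂pathMeasure Q η n = ∑ x, pathWeight Q η n x * F x := by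
  rw [pathMeasure, integral_finsetSum_measure
    fun x _ => (integrable_dirac (by simp)).smul_measure ENNReal.ofReal_ne_top]
  refine sum_congr rfl fun x _ => ?_
  rw [integral_smul_measure, integral_dirac, ENNReal.toReal_ofReal (pathWeight_nonneg hQ hη n x),
    smul_eq_mul]

namespace IsMarkovChain

variable [MeasurableSpace A] [MeasurableSingletonClass A] {Ω : Type*} [MeasurableSpace Ω]
  {P : Measure Ω} {X : ℕ → Ω → A}

lemma integral_comp_path (hX : IsMarkovChain P X Q η) (hQ : Q ∈ rowStochastic ℝ A)
    (hη : η ∈ stdSimplex ℝ A) (n : ℕ) (F : (Fin (n + 1) → A) → ℝ) :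
    ∫ ω, F (fun i => X i ω) ∂P = ∑ x, pathWeight Q η n x * F x := by
  rw [← integral_pathMeasure hQ hη]
  exact (hX n).integral_comp (measurable_of_countable F).aestronglyMeasurable

lemma integral_comp_path_next (hX : IsMarkovChain P X Q η) (hQ : Q ∈ rowStochastic ℝ A)
    (hη : η ∈ stdSimplex ℝ A) (n : ℕ) (F : (Fin (n + 1) → A) → A → ℝ) :
    ∫ ω, F (fun i => X i ω) (X (n + 1) ω) ∂P =
      ∫ ω, ∑ y, Q (X n ω) y * F (fun i => X i ω) y ∂P := by
  have hnext := hX.integral_comp_path hQ hη (n + 1)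
    fun x => F (fun i => x i.castSucc) (x (Fin.last (n + 1)))
  have hpast := hX.integral_comp_path hQ hη n fun x => ∑ y, Q (x (Fin.last n)) y * F x y
  simp only [Fin.val_castSucc, Fin.val_last] at hnext hpast
  rw [hnext, hpast]
  simp only [sum_fin_snoc (n + 1), pathWeight_snoc, Fin.snoc_castSucc, Fin.snoc_last, mul_sum,
    mul_assoc]

lemma integral_comp (hX : IsMarkovChain P X Q η) (hQ : Q ∈ rowStochastic ℝ A)
    (hη : η ∈ stdSimplex ℝ A) (n : ℕ) (f : A → ℝ) : ∫ ω, f (X n ω) ∂P = η ⬝ᵥ (Q ^ n *ᵥ f) := by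
  induction n generalizing f with
  | zero =>
    have h := hX.integral_comp_path hQ hη 0 fun x => f (x 0)
    rw [← (Equiv.funUnique (Fin 1) A).symm.sum_comp] at h
    simpa [pathWeight, dotProduct] using h
  | succ n ih =>
    rw [hX.integral_comp_path_next hQ hη n fun _ y => f y, pow_succ, ← mulVec_mulVec]
    exact ih (Q *ᵥ f)

theorem tendsto_measureReal_eq [Nonempty A] [IsFiniteMeasure P] (hX : IsMarkovChain P X Q η)
    (hQ : Q ∈ rowStochastic ℝ A) (hη : η ∈ stdSimplex ℝ A) (hprim : Q.IsPrimitive) {π : A → ℝ}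
    (hπ : ∑ x, π x = 1) (hstat : π ᵥ* Q = π) (a : A) :
    Tendsto (fun n => P.real {ω | X n ω = a}) atTop (𝓝 (π a)) := by
  have hprob : ∀ n, P.real {ω | X n ω = a} = η ⬝ᵥ (Q ^ n *ᵥ Pi.single a 1) := fun n => by
    have hnull : NullMeasurableSet {ω | X n ω = a} P :=
      (hX.aemeasurable n).nullMeasurableSet_preimage (measurableSet_singleton a)
    rw [← hX.integral_comp hQ hη, ← setIntegral_one_eq_measureReal, ← integral_indicator₀ hnull]
    exact integral_congr_ae (.of_forall fun ω => by simp [Pi.single_apply, Set.indicator])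
  have hdot : Continuous fun f : A → ℝ => η ⬝ᵥ f := by unfold dotProduct; fun_prop
  have hval : η ⬝ᵥ (fun _ => π ⬝ᵥ Pi.single a 1) = π a := by
    rw [dotProduct, ← sum_mul, hη.2, one_mul, dotProduct_single_one]
  rw [← hval]
  simpa only [hprob, Function.comp_def] using
    (hdot.tendsto _).comp (tendsto_pow_mulVec hQ hprim hπ hstat (Pi.single a 1))

end IsMarkovChain

end MarkovChain

section AdditiveFunctionals

open ProbabilityTheory Matrix Topology

/-- The number of times `i < n` at which the trajectory `x` is in the state `s`. -/
def visits {S : Type*} [DecidableEq S] (x : ℕ → S) (n : ℕ) (s : S) : ℕ :=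
  ∑ i ∈ range n, if x i = s then 1 else 0

variable {A : Type*} [Fintype A]

lemma sum_mul_add_sq_le {q : A → ℝ} (hq : q ∈ stdSimplex ℝ A) (h : A → ℝ) (c : ℝ) :
    ∑ y, q y * (c + h y) ^ 2 ≤ (c + q ⬝ᵥ h) ^ 2 + ‖h‖ ^ 2 := by
  have hexpand : ∑ y, q y * (c + h y) ^ 2 =
      (c + q ⬝ᵥ h) ^ 2 + ∑ y, q y * h y ^ 2 - (q ⬝ᵥ h) ^ 2 := by
    have : ∀ y, q y * (c + h y) ^ 2 = q y * c ^ 2 + 2 * c * (q y * h y) + q y * h y ^ 2 :=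
      fun y => by ring
    simp only [this, sum_add_distrib, ← sum_mul, ← mul_sum, hq.2, dotProduct]
    ring
  have hsecond : ∑ y, q y * h y ^ 2 ≤ ‖h‖ ^ 2 := by
    calc ∑ y, q y * h y ^ 2 ≤ ∑ y, q y * ‖h‖ ^ 2 := sum_le_sum fun y _ =>
          mul_le_mul_of_nonneg_left (sq_le_sq.2 (by simpa using norm_le_pi_norm h y)) (hq.1 y)
      _ = ‖h‖ ^ 2 := by rw [← sum_mul, hq.2, one_mul]
  linarith [sq_nonneg (q ⬝ᵥ h)]

lemma sum_mul_add_sq_le_of_sub_mulVec_eq [DecidableEq A] {Q : Matrix A A ℝ}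
    (hQ : Q ∈ rowStochastic ℝ A) {f h : A → ℝ} (hh : h - Q *ᵥ h = f) (c : ℝ) (x : A) :
    ∑ y, Q x y * (c + f x + h y) ^ 2 ≤ (c + h x) ^ 2 + ‖h‖ ^ 2 := by
  have hfh : f x + Q x ⬝ᵥ h = h x := by simp [← hh, mulVec]
  have hrow : Q x ∈ stdSimplex ℝ A :=
    ⟨fun _ => nonneg_of_mem_rowStochastic hQ, sum_row_of_mem_rowStochastic hQ x⟩
  simpa only [add_assoc, hfh] using sum_mul_add_sq_le hrow h (c + f x)

variable {Q : Matrix A A ℝ} {η : A → ℝ} [MeasurableSpace A] [MeasurableSingletonClass A]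
  {Ω : Type*} [MeasurableSpace Ω] {P : Measure Ω} {X : ℕ → Ω → A}

namespace IsMarkovChain

lemma integrable_sum_add_sq [IsFiniteMeasure P] (hX : IsMarkovChain P X Q η) (f h : A → ℝ)
    (n : ℕ) : Integrable (fun ω => (∑ i ∈ range n, f (X i ω) + h (X n ω)) ^ 2) P := by
  simpa [← Fin.sum_univ_eq_sum_range] using hX.integrable_comp_path n fun x =>
    (∑ i : Fin n, f (x i.castSucc) + h (x (Fin.last n))) ^ 2

lemma aemeasurable_visits [DecidableEq A] (hX : IsMarkovChain P X Q η) (n : ℕ) (a : A) :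
    AEMeasurable (fun ω => visits (fun i => X i ω) n a) P := by
  refine Finset.aemeasurable_fun_sum _ fun i _ => ?_
  exact (measurable_of_countable fun x => if x = a then 1 else 0).comp_aemeasurable
    (hX.aemeasurable i)

variable [DecidableEq A]

lemma integral_sum_add_sq_succ_le [IsProbabilityMeasure P] (hX : IsMarkovChain P X Q η)
    (hQ : Q ∈ rowStochastic ℝ A) (hη : η ∈ stdSimplex ℝ A) {f h : A → ℝ} (hh : h - Q *ᵥ h = f)
    (n : ℕ) : ∫ ω, (∑ i ∈ range (n + 1), f (X i ω) + h (X (n + 1) ω)) ^ 2 ∂P ≤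
      ∫ ω, (∑ i ∈ range n, f (X i ω) + h (X n ω)) ^ 2 ∂P + ‖h‖ ^ 2 := by
  have hnext := hX.integral_comp_path_next hQ hη n fun x y => (∑ i, f (x i) + h y) ^ 2
  have hint := hX.integrable_comp_path n fun x =>
    ∑ y, Q (x (Fin.last n)) y * (∑ i, f (x i) + h y) ^ 2
  have hfin : ∀ ω, ∑ i : Fin (n + 1), f (X i ω) = ∑ i ∈ range n, f (X i ω) + f (X n ω) :=
    fun ω => by rw [Fin.sum_univ_eq_sum_range (fun i => f (X i ω)), sum_range_succ]
  simp only [Fin.val_last, hfin] at hnext hint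
  simp only [sum_range_succ]
  calc _ = _ := hnext
    _ ≤ ∫ ω, ((∑ i ∈ range n, f (X i ω) + h (X n ω)) ^ 2 + ‖h‖ ^ 2) ∂P :=
        integral_mono hint ((hX.integrable_sum_add_sq f h n).add (integrable_const _))
          fun ω => sum_mul_add_sq_le_of_sub_mulVec_eq hQ hh _ _
    _ = _ := by simp [integral_add (hX.integrable_sum_add_sq f h n) (integrable_const _)]

-- If `h - Q h = f` then `∑ i < n, f (X i) + h (X n)` is a martingale with bounded increments.
lemma integral_sum_add_sq_le [IsProbabilityMeasure P] (hX : IsMarkovChain P X Q η)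
    (hQ : Q ∈ rowStochastic ℝ A) (hη : η ∈ stdSimplex ℝ A) {f h : A → ℝ} (hh : h - Q *ᵥ h = f)
    (n : ℕ) : ∫ ω, (∑ i ∈ range n, f (X i ω) + h (X n ω)) ^ 2 ∂P ≤ ‖h‖ ^ 2 * (n + 1) := by
  induction n with
  | zero =>
    calc _ ≤ ∫ _, ‖h‖ ^ 2 ∂P := integral_mono (hX.integrable_sum_add_sq f h 0)
          (integrable_const _) fun ω => by
            simpa using sq_le_sq.2 (by simpa using norm_le_pi_norm h (X 0 ω))
      _ = _ := by simp
  | succ n ih =>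
    calc _ ≤ _ := hX.integral_sum_add_sq_succ_le hQ hη hh n
      _ ≤ ‖h‖ ^ 2 * (n + 1) + ‖h‖ ^ 2 := by gcongr
      _ = ‖h‖ ^ 2 * ((n + 1 : ℕ) + 1) := by push_cast; ring

theorem exists_forall_integral_sum_sq_le [Nonempty A] [IsProbabilityMeasure P]
    (hX : IsMarkovChain P X Q η) (hQ : Q ∈ rowStochastic ℝ A) (hη : η ∈ stdSimplex ℝ A)
    (hprim : Q.IsPrimitive) {π : A → ℝ} (hπ : ∑ x, π x = 1) (hstat : π ᵥ* Q = π) {f : A → ℝ}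
    (hf : π ⬝ᵥ f = 0) : ∃ K, ∀ n : ℕ, ∫ ω, (∑ i ∈ range n, f (X i ω)) ^ 2 ∂P ≤ K * (n + 1) := by
  obtain ⟨h, hh⟩ := exists_sub_mulVec_eq hQ hprim hπ hstat hf
  refine ⟨4 * ‖h‖ ^ 2, fun n => ?_⟩
  have hint := (hX.integrable_sum_add_sq f h n).const_mul 2
  have hsq : ∀ ω, (∑ i ∈ range n, f (X i ω)) ^ 2 ≤
      2 * (∑ i ∈ range n, f (X i ω) + h (X n ω)) ^ 2 + 2 * ‖h‖ ^ 2 := fun ω => by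
    have : h (X n ω) ^ 2 ≤ ‖h‖ ^ 2 := sq_le_sq.2 (by simpa using norm_le_pi_norm h (X n ω))
    nlinarith [sq_nonneg (∑ i ∈ range n, f (X i ω) + 2 * h (X n ω))]
  calc _ ≤ ∫ ω, (2 * (∑ i ∈ range n, f (X i ω) + h (X n ω)) ^ 2 + 2 * ‖h‖ ^ 2) ∂P :=
        integral_mono (by simpa using hX.integrable_sum_add_sq f 0 n)
          (hint.add (integrable_const _)) hsq
    _ ≤ 2 * (‖h‖ ^ 2 * (n + 1)) + 2 * ‖h‖ ^ 2 := by
        rw [integral_add hint (integrable_const _), integral_const_mul]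
        simpa using hX.integral_sum_add_sq_le hQ hη hh n
    _ ≤ 4 * ‖h‖ ^ 2 * (n + 1) := by nlinarith [sq_nonneg ‖h‖, Nat.cast_nonneg (α := ℝ) n]

theorem exists_forall_integral_visits_sub_sq_le [Nonempty A] [IsProbabilityMeasure P]
    (hX : IsMarkovChain P X Q η) (hQ : Q ∈ rowStochastic ℝ A) (hη : η ∈ stdSimplex ℝ A)
    (hprim : Q.IsPrimitive) {π : A → ℝ} (hπ : ∑ x, π x = 1) (hstat : π ᵥ* Q = π) (a : A) :
    ∃ K, ∀ n : ℕ, ∫ ω, (visits (fun i => X i ω) n a - π a * n) ^ 2 ∂P ≤ K * (n + 1) := by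
  have hmean : π ⬝ᵥ (Pi.single a 1 - fun _ => π a) = 0 := by
    rw [dotProduct_sub, dotProduct_single_one, sub_eq_zero]
    simp [dotProduct, ← sum_mul, hπ]
  obtain ⟨K, hK⟩ := hX.exists_forall_integral_sum_sq_le hQ hη hprim hπ hstat hmean
  refine ⟨K, fun n => ?_⟩
  convert hK n using 4 with ω
  simp [visits, Pi.single_apply, sum_sub_distrib, mul_comm]

end IsMarkovChain

end AdditiveFunctionals

section OccupancyCounts

/-- The probability that the last of `m + 1` independent draws from the distribution `q` occurs
exactly `r` times among the first `m` ones: the binomial probability of `r` successes in `m` trials,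
averaged over a success probability picked from `q` itself. -/
noncomputable def mixedBernstein {ι : Type*} (q : ι → ℝ) (r m : ℕ) : ℝ :=
  ∑' j, q j * (bernsteinPolynomial ℝ m r).eval (q j)

lemma filter_insert_eq_insert_iff {κ : Type*} [DecidableEq κ] {s t : Finset κ} {l : κ} (hs : l ∉ s)
    (ht : l ∉ t) (p : κ → Prop) [DecidablePred p] :
    filter p (insert l s) = insert l t ↔ p l ∧ filter p s = t := by
  simp only [Finset.ext_iff, mem_filter, mem_insert]
  grind

lemma eval_bernsteinPolynomial (m r : ℕ) (u : ℝ) :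
    (bernsteinPolynomial ℝ m r).eval u = m.choose r * u ^ r * (1 - u) ^ (m - r) := by
  simp [bernsteinPolynomial]

variable {κ ι : Type*} [Fintype κ] [DecidableEq ι] [MeasurableSpace ι] [MeasurableSingletonClass ι]
  {μ : κ → Measure ι} [∀ i, IsProbabilityMeasure (μ i)]

lemma measureReal_pi_filter_eq {s t : Finset κ} (hts : t ⊆ s) {j : ι} {q : ℝ}
    (hq : ∀ i ∈ s, (μ i).real {j} = q) :
    (Measure.pi μ).real {k | {i ∈ s | k i = j} = t} = q ^ #t * (1 - q) ^ (#s - #t) := by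
  classical
  have hbox : {k : κ → ι | {i ∈ s | k i = j} = t} =
      Set.univ.pi fun i => if i ∈ t then {j} else if i ∈ s then {j}ᶜ else Set.univ := by
    ext k
    simp only [Set.mem_ofPred_eq, Set.mem_univ_pi, Finset.ext_iff, mem_filter]
    refine forall_congr' fun i => ?_
    by_cases hi : i ∈ t
    · simp [hi, hts hi]
    · by_cases hs : i ∈ s <;> simp [hi, hs]
  have hfactor : ∀ i, (μ i).real (if i ∈ t then {j} else if i ∈ s then {j}ᶜ else Set.univ) =
      (if i ∈ t then q else 1) * if i ∈ s \ t then 1 - q else 1 := fun i => by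
    by_cases hi : i ∈ t
    · simp [hi, hq i (hts hi)]
    · by_cases hs : i ∈ s <;> simp [hi, hs, probReal_compl_eq_one_sub, hq]
  rw [hbox, Measure.real, Measure.pi_pi, ENNReal.toReal_prod]
  simp only [← Measure.real_def, hfactor, prod_mul_distrib, prod_ite_mem, univ_inter, prod_const,
    card_sdiff_of_subset hts]

variable [Countable ι]

lemma measureReal_pi_eq_and_card_filter_eq {s : Finset κ} {l : κ} (hl : l ∉ s) {j : ι} {q : ℝ}
    (hq : ∀ i ∈ s, (μ i).real {j} = q) (hql : (μ l).real {j} = q) (r : ℕ) :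
    (Measure.pi μ).real {k | k l = j ∧ #{i ∈ s | k i = j} = r} =
      q * (bernsteinPolynomial ℝ #s r).eval q := by
  classical
  have hsplit : ∀ t ∈ s.powersetCard r, ∀ k : κ → ι,
      {i ∈ insert l s | k i = j} = insert l t ↔ k l = j ∧ {i ∈ s | k i = j} = t := fun t ht k =>
    filter_insert_eq_insert_iff hl (fun h => hl ((mem_powersetCard.1 ht).1 h)) _
  have hunion : {k : κ → ι | k l = j ∧ #{i ∈ s | k i = j} = r} =
      ⋃ t ∈ s.powersetCard r, {k | {i ∈ insert l s | k i = j} = insert l t} := by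
    ext k
    simp +contextual [hsplit, mem_powersetCard]
  have hterm : ∀ t ∈ s.powersetCard r,
      (Measure.pi μ).real {k | {i ∈ insert l s | k i = j} = insert l t} =
        q ^ (r + 1) * (1 - q) ^ (#s - r) := fun t ht => by
    obtain ⟨hts, htr⟩ := mem_powersetCard.1 ht
    rw [measureReal_pi_filter_eq (insert_subset_insert l hts)
      ((forall_mem_insert _ _ _).2 ⟨hql, hq⟩), card_insert_of_notMem hl,
      card_insert_of_notMem fun h => hl (hts h), htr, Nat.add_sub_add_right]
  have hdisj : Set.PairwiseDisjoint (s.powersetCard r : Set (Finset κ))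
      fun t => {k : κ → ι | {i ∈ insert l s | k i = j} = insert l t} := by
    refine fun t ht t' ht' hne => Set.disjoint_left.2 fun k hk hk' => hne ?_
    exact ((hsplit t ht k).1 hk).2.symm.trans ((hsplit t' ht' k).1 hk').2
  rw [hunion, measureReal_biUnion_finset hdisj fun t _ => Set.to_countable _ |>.measurableSet,
    sum_congr rfl hterm, sum_const, card_powersetCard, eval_bernsteinPolynomial, nsmul_eq_mul]
  ring

theorem measureReal_pi_card_filter_eq {s : Finset κ} {l : κ} (hl : l ∉ s)
    (hμ : ∀ i ∈ s, μ i = μ l) (r : ℕ) :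
    (Measure.pi μ).real {k | #{i ∈ s | k i = k l} = r} =
      mixedBernstein (fun j => (μ l).real {j}) r #s := by
  have hunion : {k : κ → ι | #{i ∈ s | k i = k l} = r} =
      ⋃ j, {k | k l = j ∧ #{i ∈ s | k i = j} = r} := by ext k; simp
  have hdisj : Pairwise (Function.onFun Disjoint
      fun j => {k : κ → ι | k l = j ∧ #{i ∈ s | k i = j} = r}) := fun j j' hne =>
    Set.disjoint_left.2 fun k hk hk' => hne (hk.1.symm.trans hk'.1)
  rw [hunion, Measure.real, measure_iUnion hdisj fun j => Set.to_countable _ |>.measurableSet,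
    ENNReal.tsum_toReal_eq fun _ => measure_ne_top _ _]
  exact tsum_congr fun j => measureReal_pi_eq_and_card_filter_eq hl
    (fun i hi => by rw [hμ i hi]) rfl r

end OccupancyCounts

section RegimeSwitching

open ProbabilityTheory Matrix Topology

variable {A ι : Type*} [MeasurableSpace A] [MeasurableSpace ι]

lemma exists_pmf_toReal_eq {ι : Type*} {q : ι → ℝ} (hq0 : ∀ k, 0 ≤ q k) (hq : HasSum q 1) :
    ∃ μ : PMF ι, ∀ k, (μ k).toReal = q k := by
  refine ⟨⟨fun k => ENNReal.ofReal (q k), ?_⟩, fun k => ENNReal.toReal_ofReal (hq0 k)⟩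
  rw [ENNReal.summable.hasSum_iff, ← ENNReal.ofReal_tsum_of_nonneg hq0 hq.summable, hq.tsum_eq,
    ENNReal.ofReal_one]

lemma measurable_pairing {κ : Type*} (x : κ → A) : Measurable fun (k : κ → ι) i => (x i, k i) := by
  fun_prop

variable [Fintype A]

/-- The law of the first `n + 1` steps of a regime switching process: the regimes form a Markov
chain with transition matrix `Q` and initial distribution `η` and, given the regimes, the marks are
independent, a mark in regime `a` having distribution `p a`. -/
noncomputable def regimePathMeasure (Q : Matrix A A ℝ) (η : A → ℝ) (p : A → PMF ι) (n : ℕ) :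
    Measure (Fin (n + 1) → A × ι) :=
  ∑ x, ENNReal.ofReal (pathWeight Q η n x) •
    (Measure.pi fun i => (p (x i)).toMeasure).map fun k i => (x i, k i)

/-- `Z` is under `P` a regime switching process: `(Z n).1` is the regime and `(Z n).2` the mark at
time `n`, and the joint laws are those of `regimePathMeasure`. -/
def IsRegimeSwitching {Ω : Type*} [MeasurableSpace Ω] (P : Measure Ω) (Z : ℕ → Ω → A × ι)
    (Q : Matrix A A ℝ) (η : A → ℝ) (p : A → PMF ι) : Prop :=
  ∀ n, HasLaw (fun ω (i : Fin (n + 1)) => Z i ω) (regimePathMeasure Q η p n) P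

variable {Q : Matrix A A ℝ} {η : A → ℝ} {p : A → PMF ι}

lemma map_fst_regimePathMeasure (n : ℕ) :
    (regimePathMeasure Q η p n).map (fun z i => (z i).1) = pathMeasure Q η n := by
  have hfst : Measurable fun (z : Fin (n + 1) → A × ι) i => (z i).1 := by fun_prop
  rw [regimePathMeasure, pathMeasure, Measure.map_finset_sum hfst.aemeasurable]
  refine sum_congr rfl fun x _ => ?_
  rw [Measure.map_smul, Measure.map_map hfst (measurable_pairing x)]
  simp [Function.comp_def, Measure.map_const]

variable {Ω : Type*} [MeasurableSpace Ω] {P : Measure Ω} {Z : ℕ → Ω → A × ι}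

lemma IsRegimeSwitching.isMarkovChain_fst (hZ : IsRegimeSwitching P Z Q η p) :
    IsMarkovChain P (fun n ω => (Z n ω).1) Q η := fun n =>
  have hfst : HasLaw (fun z i => (z i).1) (pathMeasure Q η n) (regimePathMeasure Q η p n) :=
    ⟨Measurable.aemeasurable (by fun_prop), map_fst_regimePathMeasure n⟩
  hfst.comp (hZ n)

lemma regimePathMeasure_univ [DecidableEq A] (hQ : Q ∈ rowStochastic ℝ A)
    (hη : η ∈ stdSimplex ℝ A) (n : ℕ) : regimePathMeasure Q η p n Set.univ = 1 := by
  simp only [regimePathMeasure, Measure.finsetSum_apply, Measure.smul_apply, smul_eq_mul,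
    Measure.map_apply (measurable_pairing _) MeasurableSet.univ, Set.preimage_univ, measure_univ,
    mul_one]
  rw [← ENNReal.ofReal_sum_of_nonneg fun x _ => pathWeight_nonneg hQ hη n x,
    sum_pathWeight hQ hη n, ENNReal.ofReal_one]

lemma regimePathMeasure_singleton [MeasurableSingletonClass A] [MeasurableSingletonClass ι] (n : ℕ)
    (z : Fin (n + 1) → A × ι) : regimePathMeasure Q η p n {z} =
      ENNReal.ofReal (pathWeight Q η n fun i => (z i).1) * ∏ i, p (z i).1 (z i).2 := by
  classical
  have hmap : ∀ x : Fin (n + 1) → A,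
      ((Measure.pi fun i => (p (x i)).toMeasure).map fun k i => (x i, k i)) {z} =
        if x = fun i => (z i).1 then ∏ i, p (z i).1 (z i).2 else 0 := fun x => by
    rw [Measure.map_apply (measurable_pairing x) (measurableSet_singleton z)]
    split_ifs with hx
    · have : (fun (k : Fin (n + 1) → ι) i => (x i, k i)) ⁻¹' {z} =
          Set.univ.pi fun i => {(z i).2} := by
        ext k; simp [funext_iff, hx, Prod.ext_iff]
      rw [this, Measure.pi_pi]
      simp [hx, PMF.toMeasure_apply_singleton]
    · have : (fun (k : Fin (n + 1) → ι) i => (x i, k i)) ⁻¹' {z} = ∅ := by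
        ext k
        simpa using fun h => hx (funext fun i => congrArg Prod.fst (congrFun h i))
      rw [this, measure_empty]
  simp [regimePathMeasure, hmap]

lemma visits_eq_card_filter {S : Type*} [DecidableEq S] (x : ℕ → S) (n : ℕ) (s : S) :
    visits x n s = #{i ∈ univ.erase (Fin.last n) | x (i : Fin (n + 1)) = s} := by
  have herase := sum_erase_add univ (fun i : Fin (n + 1) => if x i = s then 1 else 0)
    (mem_univ (Fin.last n))
  rw [Fin.sum_univ_castSucc] at herase
  rw [visits, card_filter, add_right_cancel herase]
  exact (Fin.sum_univ_eq_sum_range (fun i => if x i = s then 1 else 0) n).symm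

variable [MeasurableSingletonClass A] [MeasurableSingletonClass ι] [Countable ι]

lemma isRegimeSwitching_of_measure_biInter [DecidableEq A] [IsProbabilityMeasure P]
    (hQ : Q ∈ rowStochastic ℝ A) (hη : η ∈ stdSimplex ℝ A)
    (hZ : ∀ (n : ℕ) (a : ℕ → A) (k : ℕ → ι),
      P (⋂ i ∈ range (n + 1), {ω | Z i ω = (a i, k i)}) =
        ENNReal.ofReal ((η (a 0) * ∏ i ∈ range n, Q (a i) (a (i + 1))) *
          ∏ i ∈ range (n + 1), (p (a i) (k i)).toReal)) : IsRegimeSwitching P Z Q η p := fun n => by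
  refine hasLaw_of_measure_preimage_singleton (fun z => ?_)
    ((regimePathMeasure_univ hQ hη n).trans measure_univ.symm)
  set z' : ℕ → A × ι := fun i => z (Fin.ofNat (n + 1) i) with hz'
  have hz : ∀ i : Fin (n + 1), z' i = z i := fun i => by simp [hz']
  have hevent : (fun ω (i : Fin (n + 1)) => Z i ω) ⁻¹' {z} =
      ⋂ i ∈ range (n + 1), {ω | Z i ω = ((z' i).1, (z' i).2)} := by
    ext ω
    simp [funext_iff, ← hz, Fin.forall_iff]
  have hweight : η (z' 0).1 * ∏ i ∈ range n, Q (z' i).1 (z' (i + 1)).1 =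
      pathWeight Q η n fun i => (z i).1 := by
    simp only [pathWeight, ← hz, Fin.val_castSucc, Fin.val_succ, Fin.val_zero]
    rw [← Fin.prod_univ_eq_prod_range (fun i => Q (z' i).1 (z' (i + 1)).1) n]
  have hmarks : ∏ i ∈ range (n + 1), (p (z' i).1 (z' i).2).toReal =
      (∏ i, p (z i).1 (z i).2).toReal := by
    rw [← Fin.prod_univ_eq_prod_range (fun i => (p (z' i).1 (z' i).2).toReal) (n + 1),
      ENNReal.toReal_prod]
    simp only [hz]
  rw [hevent, hZ n, hweight, hmarks, regimePathMeasure_singleton,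
    ENNReal.ofReal_mul (pathWeight_nonneg hQ hη n _), ENNReal.ofReal_toReal]
  exact ENNReal.prod_ne_top fun i _ => (p _).apply_ne_top _

lemma measureReal_regimePathMeasure [DecidableEq A] (hQ : Q ∈ rowStochastic ℝ A)
    (hη : η ∈ stdSimplex ℝ A) (n : ℕ) (s : Set (Fin (n + 1) → A × ι)) :
    (regimePathMeasure Q η p n).real s =
      ∑ x, pathWeight Q η n x *
        (Measure.pi fun i => (p (x i)).toMeasure).real {k | (fun i => (x i, k i)) ∈ s} := by
  simp only [regimePathMeasure, Measure.real, Measure.finsetSum_apply, Measure.smul_apply,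
    smul_eq_mul, Measure.map_apply (measurable_pairing _) s.to_countable.measurableSet]
  rw [ENNReal.toReal_sum fun x _ => ENNReal.mul_ne_top ofReal_ne_top (measure_ne_top _ _)]
  simp only [ENNReal.toReal_mul, ENNReal.toReal_ofReal (pathWeight_nonneg hQ hη n _)]
  rfl

theorem IsRegimeSwitching.measureReal_visits_eq [DecidableEq A] [DecidableEq ι]
    (hZ : IsRegimeSwitching P Z Q η p) (hQ : Q ∈ rowStochastic ℝ A)
    (hη : η ∈ stdSimplex ℝ A) (n r : ℕ) :
    P.real {ω | visits (fun i => Z i ω) n (Z n ω) = r} =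
      ∫ ω, mixedBernstein (fun j => (p (Z n ω).1 j).toReal) r
        (visits (fun i => (Z i ω).1) n (Z n ω).1) ∂P := by
  have hcond : ∀ x : Fin (n + 1) → A, (Measure.pi fun i => (p (x i)).toMeasure).real
      {k | #{i ∈ univ.erase (Fin.last n) | (x i, k i) = (x (Fin.last n), k (Fin.last n))} = r} =
        mixedBernstein (fun j => (p (x (Fin.last n)) j).toReal) r
          #{i ∈ univ.erase (Fin.last n) | x i = x (Fin.last n)} := fun x => by
    simp only [Prod.mk_inj, ← filter_filter]
    rw [measureReal_pi_card_filter_eq (by simp) (fun i hi => by rw [(mem_filter.1 hi).2])]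
    simp [Measure.real, PMF.toMeasure_apply_singleton]
  have hlaw := (hZ n).measureReal_eq
    (p := fun z => #{i ∈ univ.erase (Fin.last n) | z i = z (Fin.last n)} = r)
    (Set.to_countable _).measurableSet
  have hchain := hZ.isMarkovChain_fst.integral_comp_path hQ hη n fun x =>
    mixedBernstein (fun j => (p (x (Fin.last n)) j).toReal) r
      #{i ∈ univ.erase (Fin.last n) | x i = x (Fin.last n)}
  simp only [visits_eq_card_filter]
  refine hlaw.trans (Eq.trans ?_ hchain.symm)
  rw [measureReal_regimePathMeasure hQ hη]
  exact sum_congr rfl fun x _ => congrArg _ (hcond x)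

end RegimeSwitching

section RegularVariation

open Topology

/-- `U` is nondecreasing on `(0, ∞)`, eventually positive, and regularly varying at `∞` of index
`α`. -/
structure IsMonotoneRegularlyVarying (U : ℝ → ℝ) (α : ℝ) : Prop where
  monotoneOn : MonotoneOn U (Set.Ioi 0)
  eventually_pos : ∀ᶠ x in atTop, 0 < U x
  tendsto_div : ∀ c : ℝ, 0 < c → Tendsto (fun x => U (c * x) / U x) atTop (𝓝 (c ^ α))

namespace IsMonotoneRegularlyVarying

variable {U : ℝ → ℝ} {α : ℝ}

lemma tendsto_atTop (hU : IsMonotoneRegularlyVarying U α) (hα : 0 < α) :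
    Tendsto U atTop atTop := by
  have hmono : Monotone fun x => U (max x 1) := fun x y hxy =>
    hU.monotoneOn (by simp) (by simp) (max_le_max_right 1 hxy)
  have heq : (fun x => U (max x 1)) =ᶠ[atTop] U := by
    filter_upwards [eventually_ge_atTop 1] with x hx
    rw [max_eq_left hx]
  rcases tendsto_atTop_of_monotone hmono with htop | ⟨L, hL⟩
  · exact htop.congr' heq
  obtain ⟨x, hx, hx1⟩ := (hU.eventually_pos.and (eventually_ge_atTop 1)).exists
  have hLpos : 0 < L := (max_eq_left hx1 ▸ hx).trans_le (hmono.ge_of_tendsto hL x)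
  replace hL := hL.congr' heq
  have hratio := (hL.comp (tendsto_id.const_mul_atTop two_pos)).div hL hLpos.ne'
  rw [div_self hLpos.ne'] at hratio
  exact absurd (tendsto_nhds_unique (hU.tendsto_div 2 two_pos) hratio)
    (Real.one_lt_rpow one_lt_two hα).ne'

-- Potter's bound, by iterating the comparison between `x` and `2 * x`.
lemma eventually_forall_le_rpow_mul (hU : IsMonotoneRegularlyVarying U α) {β : ℝ} (hβ : α < β)
    (hβ0 : 0 ≤ β) : ∀ᶠ x in atTop, ∀ l, 1 ≤ l → U (l * x) ≤ (2 * l) ^ β * U x := by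
  have hdouble := ((hU.tendsto_div 2 two_pos).eventually_le_const
    (Real.rpow_lt_rpow_of_exponent_lt one_lt_two hβ)).and hU.eventually_pos
  filter_upwards [eventually_forall_ge_atTop.2 hdouble, eventually_gt_atTop 0] with x hx hx0 l hl
  have hpow : ∀ j : ℕ, U (2 ^ j * x) ≤ ((2 : ℝ) ^ j) ^ β * U x := fun j => by
    induction j with
    | zero => simp
    | succ j ih =>
      obtain ⟨hle, hpos⟩ := hx (2 ^ j * x) (le_mul_of_one_le_left hx0.le (one_le_pow₀ one_le_two))
      calc U (2 ^ (j + 1) * x) = U (2 * (2 ^ j * x)) := by ring_nf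
        _ ≤ 2 ^ β * U (2 ^ j * x) := (div_le_iff₀ hpos).1 hle
        _ ≤ 2 ^ β * (((2 : ℝ) ^ j) ^ β * U x) := by gcongr
        _ = ((2 : ℝ) ^ (j + 1)) ^ β * U x := by
          rw [pow_succ', Real.mul_rpow two_pos.le (by positivity), mul_assoc]
  obtain ⟨j, hjl, hlj⟩ := exists_nat_pow_near hl one_lt_two
  calc U (l * x) ≤ U (2 ^ (j + 1) * x) := hU.monotoneOn (Set.mem_Ioi.2 (by positivity))
        (Set.mem_Ioi.2 (by positivity)) (by gcongr)
    _ ≤ ((2 : ℝ) ^ (j + 1)) ^ β * U x := hpow (j + 1)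
    _ ≤ (2 * l) ^ β * U x := by
      have := (hx x le_rfl).2
      gcongr
      rw [pow_succ']
      gcongr

-- Monotonicity squeezes `y i` between multiples of `x i` by constants close to `c`.
lemma tendsto_div_of_tendsto {κ : Type*} {F : Filter κ} (hU : IsMonotoneRegularlyVarying U α)
    {x y : κ → ℝ} {c : ℝ} (hc : 0 < c) (hx : Tendsto x F atTop)
    (hxy : Tendsto (fun i => y i / x i) F (𝓝 c)) :
    Tendsto (fun i => U (y i) / U (x i)) F (𝓝 (c ^ α)) := by
  have hcont : ContinuousAt (fun t : ℝ => t ^ α) c := Real.continuousAt_rpow_const c α (.inl hc.ne')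
  refine tendsto_order.2 ⟨fun a ha => ?_, fun a ha => ?_⟩
  · obtain ⟨b, ⟨hab, hb⟩, hbc⟩ := (((hcont.eventually_const_lt ha).and (lt_mem_nhds hc)).filter_mono
      nhdsWithin_le_nhds |>.and (self_mem_nhdsWithin (s := Set.Iio c))).exists
    filter_upwards [hx.eventually ((hU.tendsto_div b hb).eventually_const_lt hab),
      hx.eventually hU.eventually_pos, hx.eventually_gt_atTop 0, hxy.eventually_const_lt hbc]
      with i hi hpos hx0 hlt
    have hyi := (lt_div_iff₀ hx0).1 hlt
    refine hi.trans_le (div_le_div_of_nonneg_right ?_ hpos.le)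
    exact hU.monotoneOn (mul_pos hb hx0) ((mul_pos hb hx0).trans hyi) hyi.le
  · obtain ⟨b, hab, hcb⟩ := ((hcont.eventually_lt_const ha).filter_mono nhdsWithin_le_nhds |>.and
      (self_mem_nhdsWithin (s := Set.Ioi c))).exists
    filter_upwards [hx.eventually ((hU.tendsto_div b (hc.trans hcb)).eventually_lt_const hab),
      hx.eventually hU.eventually_pos, hx.eventually_gt_atTop 0, hxy.eventually_lt_const hcb,
      hxy.eventually_const_lt hc] with i hi hpos hx0 hlt hgt
    refine (div_le_div_of_nonneg_right ?_ hpos.le).trans_lt hi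
    exact hU.monotoneOn ((div_pos_iff_of_pos_right hx0).1 hgt) (mul_pos (hc.trans hcb) hx0)
      ((div_lt_iff₀ hx0).1 hlt).le

lemma tendsto_div_div_of_tendsto {κ : Type*} {F : Filter κ} (hU : IsMonotoneRegularlyVarying U α)
    {m n : κ → ℕ} {c : ℝ} (hc : 0 < c) (hn : Tendsto n F atTop)
    (hmn : Tendsto (fun i => (m i : ℝ) / n i) F (𝓝 c)) {G : ℕ → ℝ} {D : ℝ}
    (hG : Tendsto (fun k : ℕ => G k / (U k / k)) atTop (𝓝 D)) :
    Tendsto (fun i => G (m i) / (U (n i) / n i)) F (𝓝 (D * c ^ (α - 1))) := by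
  have hnR : Tendsto (fun i => (n i : ℝ)) F atTop := tendsto_natCast_atTop_atTop.comp hn
  have hmR : Tendsto (fun i => (m i : ℝ)) F atTop := by
    refine (hmn.pos_mul_atTop hc hnR).congr' ?_
    filter_upwards [hnR.eventually_gt_atTop 0] with i hi
    field_simp
  have hlim := (hG.comp (tendsto_natCast_atTop_iff.1 hmR)).mul
    ((hU.tendsto_div_of_tendsto hc hnR hmn).div hmn hc.ne')
  rw [← Real.rpow_sub_one hc.ne'] at hlim
  refine hlim.congr' ?_
  filter_upwards [hnR.eventually_gt_atTop 0, hmR.eventually_gt_atTop 0,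
    hnR.eventually hU.eventually_pos, hmR.eventually hU.eventually_pos] with i h₁ h₂ h₃ h₄
  simp only [Function.comp_apply, Pi.div_apply]
  field_simp

end IsMonotoneRegularlyVarying

end RegularVariation

section TailCount

open Topology

open scoped Classical in
/-- The number of indices at which `q` is at least `ε`, as a real number. -/
noncomputable def tailCount {ι : Type*} (q : ι → ℝ) (ε : ℝ) : ℝ :=
  ∑' k, if ε ≤ q k then 1 else 0

variable {ι : Type*} {q : ι → ℝ}

lemma tailCount_nonneg (ε : ℝ) : 0 ≤ tailCount q ε :=
  tsum_nonneg fun k => by positivity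

open scoped Classical in
lemma summable_ite_le (hq : Summable q) {ε : ℝ} (hε : 0 < ε) :
    Summable fun k => if ε ≤ q k then (1 : ℝ) else 0 := by
  refine summable_of_hasFiniteSupport ?_
  have hfin : {k | ¬q k < ε}.Finite :=
    eventually_cofinite.1 (hq.tendsto_cofinite_zero.eventually_lt_const hε)
  exact hfin.subset fun k hk => by simpa using hk

lemma tailCount_antitoneOn (hq : Summable q) : AntitoneOn (tailCount q) (Set.Ioi 0) := by
  classical
  refine fun ε hε δ hδ hle => (summable_ite_le hq hδ).tsum_le_tsum (fun k => ?_)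
    (summable_ite_le hq hε)
  split_ifs with h₁ h₂
  exacts [le_rfl, absurd (hle.trans h₁) h₂, zero_le_one, le_rfl]

-- Layer cake: the index `k` contributes `g u` for all `u ≤ q k`.
theorem hasSum_integral_tailCount [Countable ι] {b : ℝ} (hq0 : ∀ k, 0 ≤ q k) (hqb : ∀ k, q k ≤ b)
    (hq : Summable q) {g : ℝ → ℝ} (hg : Continuous g) :
    HasSum (fun k => ∫ u in 0..q k, g u) (∫ u in Set.Ioc 0 b, g u * tailCount q u) := by
  classical
  obtain ⟨M, hM⟩ := isCompact_Icc.exists_bound_of_continuousOn (s := Set.Icc 0 b) hg.continuousOn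
  have hset : ∀ (k) (h : ℝ → ℝ), ∫ u in Set.Ioc 0 b, (Set.Iic (q k)).indicator h u =
      ∫ u in 0..q k, h u := fun k h => by
    rw [setIntegral_indicator measurableSet_Iic, intervalIntegral.integral_of_le (hq0 k),
      Set.Ioc_inter_Iic, min_eq_right (hqb k)]
  have hint : ∀ k, Integrable ((Set.Iic (q k)).indicator g) (volume.restrict (Set.Ioc 0 b)) :=
    fun k => (hg.integrableOn_Ioc).indicator measurableSet_Iic
  have hsum : Summable fun k => ∫ u in Set.Ioc 0 b, ‖(Set.Iic (q k)).indicator g u‖ := by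
    refine (hq.mul_left M).of_norm_bounded fun k => ?_
    simp only [norm_indicator_eq_indicator_norm, hset]
    refine (intervalIntegral.norm_integral_le_of_norm_le_const fun u hu => ?_).trans_eq
      (by rw [sub_zero, abs_of_nonneg (hq0 k)])
    rw [Set.uIoc_of_le (hq0 k)] at hu
    rw [norm_norm]
    exact hM u ⟨hu.1.le, hu.2.trans (hqb k)⟩
  have hswap := hasSum_integral_of_summable_integral_norm hint hsum
  simp only [hset] at hswap
  simpa [tailCount, ← tsum_mul_left, Set.indicator_apply] using hswap

end TailCount

section Abelian

open Topology Real

lemma mul_eval_bernsteinPolynomial_eq_integral (m r : ℕ) (q : ℝ) :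
    q * (bernsteinPolynomial ℝ m r).eval q = (r + 1) *
      ((∫ u in 0..q, (bernsteinPolynomial ℝ m r).eval u) -
        ∫ u in 0..q, (bernsteinPolynomial ℝ m (r + 1)).eval u) := by
  have hderiv : ∀ u, HasDerivAt (fun u => (bernsteinPolynomial ℝ (m + 1) (r + 1)).eval u)
      ((m + 1) * ((bernsteinPolynomial ℝ m r).eval u -
        (bernsteinPolynomial ℝ m (r + 1)).eval u)) u := fun u => by
    simpa [bernsteinPolynomial.derivative_succ] using
      (bernsteinPolynomial ℝ (m + 1) (r + 1)).hasDerivAt u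
  have hint := intervalIntegral.integral_eq_sub_of_hasDerivAt (a := 0) (b := q)
    (fun u _ => hderiv u) (Continuous.intervalIntegrable (by fun_prop) _ _)
  rw [intervalIntegral.integral_const_mul, intervalIntegral.integral_sub
    (Continuous.intervalIntegrable (by fun_prop) _ _)
    (Continuous.intervalIntegrable (by fun_prop) _ _)] at hint
  have hchoose : ((m + 1).choose (r + 1) : ℝ) * (r + 1) = (m + 1) * m.choose r := by
    exact_mod_cast (Nat.add_one_mul_choose_eq m r).symm
  have hm : (m + 1 : ℝ) ≠ 0 := by positivity
  refine mul_left_cancel₀ hm ?_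
  rw [mul_left_comm _ ((r : ℝ) + 1), hint]
  simp only [eval_bernsteinPolynomial, Nat.add_sub_add_right]
  linear_combination (-q ^ (r + 1) * (1 - q) ^ (m - r)) * hchoose

theorem mixedBernstein_eq {ι : Type*} [Countable ι] {q : ι → ℝ} (hq0 : ∀ k, 0 ≤ q k)
    (hq1 : ∀ k, q k ≤ 1) (hq : Summable q) (r m : ℕ) :
    mixedBernstein q r m = (r + 1) *
      ((∫ u in Set.Ioc 0 1, (bernsteinPolynomial ℝ m r).eval u * tailCount q u) -
        ∫ u in Set.Ioc 0 1, (bernsteinPolynomial ℝ m (r + 1)).eval u * tailCount q u) := by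
  have hsum : ∀ j, HasSum (fun k => ∫ u in 0..q k, (bernsteinPolynomial ℝ m j).eval u)
      (∫ u in Set.Ioc 0 1, (bernsteinPolynomial ℝ m j).eval u * tailCount q u) := fun j =>
    hasSum_integral_tailCount hq0 hq1 hq (by fun_prop)
  simp only [mixedBernstein, mul_eval_bernsteinPolynomial_eq_integral]
  exact (((hsum r).sub (hsum (r + 1))).mul_left _).tsum_eq

lemma eval_bernsteinPolynomial_div_nonneg {m : ℕ} {y : ℝ} (hy : 0 ≤ y) (hym : y ≤ m) (j : ℕ) :
    0 ≤ (bernsteinPolynomial ℝ m j).eval (y / m) := by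
  have : 0 ≤ 1 - y / m := sub_nonneg.2 (div_le_one_of_le₀ hym m.cast_nonneg)
  rw [eval_bernsteinPolynomial]
  positivity

lemma eval_bernsteinPolynomial_div_le {m : ℕ} {y : ℝ} (hy : 0 < y) (hym : y ≤ m) (j : ℕ) :
    (bernsteinPolynomial ℝ m j).eval (y / m) ≤ exp j * (exp (-y) * y ^ j) := by
  have hm : (0 : ℝ) < m := hy.trans_le hym
  have hle : y / m ≤ 1 := (div_le_one hm).2 hym
  have hchoose : m.choose j * (y / m) ^ j ≤ y ^ j := by
    rw [div_pow, mul_div_left_comm]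
    refine mul_le_of_le_one_right (by positivity) ((div_le_one (by positivity)).2 ?_)
    exact_mod_cast Nat.choose_le_pow m j
  have hexp : (1 - y / m) ^ (m - j) ≤ exp (j - y) :=
    calc (1 - y / m) ^ (m - j) ≤ exp (-(y / m)) ^ (m - j) :=
          pow_le_pow_left₀ (sub_nonneg.2 hle) (one_sub_le_exp_neg _) _
      _ = exp (-((m - j : ℕ) * (y / m))) := by rw [← exp_nat_mul, mul_neg]
      _ ≤ exp (j - y) := by
        gcongr
        have hsub : (m : ℝ) - j ≤ (m - j : ℕ) := sub_le_iff_le_add.2 (by exact_mod_cast le_tsub_add)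
        have hdrift : (m - j) * (y / m) ≤ (m - j : ℕ) * (y / m) := by gcongr
        have hcancel : (m - j) * (y / m) = y - j * (y / m) := by field_simp
        nlinarith [(Nat.cast_nonneg j : (0 : ℝ) ≤ j)]
  calc (bernsteinPolynomial ℝ m j).eval (y / m)
      = m.choose j * (y / m) ^ j * (1 - y / m) ^ (m - j) := eval_bernsteinPolynomial m j _
    _ ≤ y ^ j * exp (j - y) := mul_le_mul hchoose hexp
        (pow_nonneg (sub_nonneg.2 hle) _) (by positivity)
    _ = exp j * (exp (-y) * y ^ j) := by rw [sub_eq_add_neg, exp_add]; ring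

lemma tendsto_eval_bernsteinPolynomial_div (j : ℕ) (y : ℝ) :
    Tendsto (fun m : ℕ => (bernsteinPolynomial ℝ m j).eval (y / m)) atTop
      (𝓝 (exp (-y) * y ^ j / j.factorial)) := by
  simp only [eval_bernsteinPolynomial]
  refine ProbabilityTheory.tendsto_choose_mul_pow_of_tendsto_mul_atTop j
    (tendsto_const_nhds.congr' ?_)
  filter_upwards [eventually_ne_atTop 0] with m hm
  field_simp

variable {U f : ℝ → ℝ} {α D : ℝ}

lemma tendsto_comp_div_div (hU : IsMonotoneRegularlyVarying U α)
    (hlim : Tendsto (fun x => f (1 / x) / U x) atTop (𝓝 D)) {y : ℝ} (hy : 0 < y) :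
    Tendsto (fun m : ℕ => f (y / m) / U m) atTop (𝓝 (D * y ^ (-α))) := by
  have hscale : Tendsto (fun x : ℝ => y⁻¹ * x) atTop atTop :=
    tendsto_id.const_mul_atTop (inv_pos.2 hy)
  have hprod := (hlim.comp hscale).mul (hU.tendsto_div y⁻¹ (inv_pos.2 hy))
  rw [inv_rpow hy.le, ← rpow_neg hy.le] at hprod
  refine Tendsto.comp (g := fun x => f (y / x) / U x) (hprod.congr' ?_) tendsto_natCast_atTop_atTop
  filter_upwards [hscale.eventually hU.eventually_pos] with x hx
  simp only [Function.comp_apply]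
  rw [div_mul_div_cancel₀ hx.ne', one_div, mul_inv, inv_inv, div_eq_mul_inv y]

lemma exists_forall_comp_div_le (hU : IsMonotoneRegularlyVarying U α)
    (hf : AntitoneOn f (Set.Ioi 0)) (hlim : Tendsto (fun x => f (1 / x) / U x) atTop (𝓝 D))
    {β : ℝ} (hβ : α < β) (hβ0 : 0 ≤ β) :
    ∃ K, 0 ≤ K ∧ ∀ᶠ m : ℕ in atTop, ∀ y, 0 < y → f (y / m) / U m ≤ K * (y ^ (-β) + 1) := by
  have hratio := (hlim.abs.eventually_le_const (lt_add_one |D|)).and hU.eventually_pos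
  have hlarge := (eventually_forall_ge_atTop.2 hratio).and
    ((hU.eventually_forall_le_rpow_mul hβ hβ0).and (eventually_gt_atTop 0))
  refine ⟨(|D| + 1) * 2 ^ β, by positivity, (tendsto_natCast_atTop_atTop.eventually hlarge).mono ?_⟩
  rintro m ⟨hle, hpotter, hm⟩ y hy
  have hbound : ∀ x, (m : ℝ) ≤ x → f (1 / x) ≤ (|D| + 1) * U x := fun x hx =>
    (div_le_iff₀ (hle x hx).2).1 ((le_abs_self _).trans (hle x hx).1)
  have hpos := (hle m le_rfl).2
  rw [div_le_iff₀ hpos]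
  rcases le_total y 1 with hy1 | hy1
  · calc f (y / m) = f (1 / (y⁻¹ * m)) := by rw [one_div, mul_inv, inv_inv, div_eq_mul_inv]
      _ ≤ (|D| + 1) * U (y⁻¹ * m) :=
          hbound _ (le_mul_of_one_le_left hm.le (one_le_inv₀ hy |>.2 hy1))
      _ ≤ (|D| + 1) * ((2 * y⁻¹) ^ β * U m) := by
        gcongr
        exact hpotter _ (one_le_inv₀ hy |>.2 hy1)
      _ = (|D| + 1) * 2 ^ β * y ^ (-β) * U m := by
        rw [mul_rpow two_pos.le (by positivity), inv_rpow hy.le, ← rpow_neg hy.le]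
        ring
      _ ≤ (|D| + 1) * 2 ^ β * (y ^ (-β) + 1) * U m := by
        gcongr
        exact le_add_of_nonneg_right zero_le_one
  · calc f (y / m) ≤ f (1 / m) := hf (Set.mem_Ioi.2 (by positivity)) (Set.mem_Ioi.2 (by positivity))
          (by gcongr)
      _ ≤ (|D| + 1) * 1 * 1 * U m := by simpa using hbound m le_rfl
      _ ≤ (|D| + 1) * 2 ^ β * (y ^ (-β) + 1) * U m := by
        gcongr
        · exact one_le_rpow one_le_two hβ0
        · exact le_add_of_nonneg_left (by positivity)

lemma integral_bernsteinPolynomial_mul_div (f : ℝ → ℝ) {m : ℕ} (hm : m ≠ 0) (j : ℕ) (c : ℝ) :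
    (∫ u in Set.Ioc 0 1, (bernsteinPolynomial ℝ m j).eval u * f u) / (c / m) =
      ∫ y in Set.Ioi 0, (Set.Iic (m : ℝ)).indicator
        (fun y => (bernsteinPolynomial ℝ m j).eval (y / m) * (f (y / m) / c)) y := by
  have hm' : (m : ℝ) ≠ 0 := Nat.cast_ne_zero.2 hm
  have hsubst := intervalIntegral.integral_comp_div (a := 0) (b := m)
    (fun u => (bernsteinPolynomial ℝ m j).eval u * (f u / c)) hm'
  rw [zero_div, div_self hm', intervalIntegral.integral_of_le m.cast_nonneg,
    intervalIntegral.integral_of_le zero_le_one] at hsubst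
  rw [setIntegral_indicator measurableSet_Iic, Set.Ioi_inter_Iic, hsubst, smul_eq_mul]
  simp only [← mul_div_assoc]
  rw [integral_div, div_div_eq_mul_div, mul_div_assoc', mul_comm]

lemma exp_neg_mul_rpow_eqOn (j : ℕ) (β : ℝ) :
    Set.EqOn (fun y => exp (-y) * y ^ (j + 1 - β - 1)) (fun y => exp (-y) * y ^ j * y ^ (-β))
      (Set.Ioi 0) := fun y hy => by
  have hsplit : (j + 1 - β - 1 : ℝ) = j + -β := by ring
  simp only [hsplit, rpow_add hy, Real.rpow_natCast, mul_assoc]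

lemma integrableOn_exp_neg_mul_pow_mul_rpow {j : ℕ} {β : ℝ} (hβ : β < j + 1) :
    IntegrableOn (fun y => exp (-y) * y ^ j * y ^ (-β)) (Set.Ioi 0) :=
  (GammaIntegral_convergent (sub_pos.2 hβ)).congr_fun (exp_neg_mul_rpow_eqOn j β) measurableSet_Ioi

lemma integral_exp_neg_mul_pow_mul_rpow {j : ℕ} (hα : α < j + 1) :
    ∫ y in Set.Ioi 0, exp (-y) * y ^ j * y ^ (-α) = Gamma (j + 1 - α) := by
  rw [Gamma_eq_integral (sub_pos.2 hα)]
  exact (setIntegral_congr_fun measurableSet_Ioi (exp_neg_mul_rpow_eqOn j α)).symm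

lemma integrableOn_exp_neg_mul_pow_mul_rpow_add_one {j : ℕ} {β : ℝ} (hβ : β < j + 1) (K : ℝ) :
    IntegrableOn (fun y => exp j * (exp (-y) * y ^ j) * (K * (y ^ (-β) + 1))) (Set.Ioi 0) := by
  have hβ0 := integrableOn_exp_neg_mul_pow_mul_rpow (Nat.cast_add_one_pos (α := ℝ) j)
  have hsum := ((integrableOn_exp_neg_mul_pow_mul_rpow hβ).add hβ0).const_mul (exp j * K)
  refine IntegrableOn.congr_fun hsum (fun y _ => ?_) measurableSet_Ioi
  simp only [Pi.add_apply, neg_zero, Real.rpow_zero]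
  ring

lemma aestronglyMeasurable_indicator_bernsteinPolynomial_mul (hf : AntitoneOn f (Set.Ioi 0)) {m : ℕ}
    (hm : 0 < m) (j : ℕ) (c : ℝ) :
    AEStronglyMeasurable ((Set.Iic (m : ℝ)).indicator fun y =>
      (bernsteinPolynomial ℝ m j).eval (y / m) * (f (y / m) / c))
        (volume.restrict (Set.Ioi 0)) := by
  have hm' : (0 : ℝ) < m := Nat.cast_pos.2 hm
  have hanti : AntitoneOn (fun y : ℝ => f (y / m)) (Set.Ioi 0) := fun x hx y hy hxy =>
    hf (div_pos hx hm') (div_pos hy hm') (by gcongr)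
  have hmeas := aemeasurable_restrict_of_antitoneOn (μ := volume) measurableSet_Ioi hanti
  refine AEStronglyMeasurable.indicator ?_ measurableSet_Iic
  exact (Continuous.aestronglyMeasurable (by fun_prop)).mul (hmeas.div_const c).aestronglyMeasurable

-- After the substitution `u = y / m`, the Bernstein polynomials become Poisson weights.
theorem tendsto_integral_bernsteinPolynomial_mul (hU : IsMonotoneRegularlyVarying U α) {j : ℕ}
    (hα : α < j + 1) (hf : AntitoneOn f (Set.Ioi 0)) (hf0 : ∀ u, 0 < u → 0 ≤ f u)
    (hlim : Tendsto (fun x => f (1 / x) / U x) atTop (𝓝 D)) :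
    Tendsto (fun m : ℕ => (∫ u in Set.Ioc 0 1, (bernsteinPolynomial ℝ m j).eval u * f u) /
      (U m / m)) atTop (𝓝 (D * (Gamma (j + 1 - α) / j.factorial))) := by
  obtain ⟨β, hβ, hβj⟩ := exists_between (max_lt hα (Nat.cast_add_one_pos (α := ℝ) j))
  obtain ⟨K, hK0, hK⟩ := exists_forall_comp_div_le hU hf hlim ((le_max_left _ _).trans_lt hβ)
    ((le_max_right _ _).trans hβ.le)
  have hvalue : D * (Gamma (j + 1 - α) / j.factorial) =
      ∫ y in Set.Ioi 0, exp (-y) * y ^ j / j.factorial * (D * y ^ (-α)) := by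
    rw [← integral_exp_neg_mul_pow_mul_rpow hα, ← integral_div, ← integral_const_mul]
    congr with y
    ring
  rw [hvalue]
  have hsubst := (eventually_ne_atTop 0).mono fun m hm =>
    (integral_bernsteinPolynomial_mul_div f hm j (U m)).symm
  refine Tendsto.congr' hsubst (tendsto_integral_filter_of_dominated_convergence _ ?_ ?_
    (integrableOn_exp_neg_mul_pow_mul_rpow_add_one hβj K) ?_)
  · filter_upwards [eventually_gt_atTop 0] with m hm
    exact aestronglyMeasurable_indicator_bernsteinPolynomial_mul hf hm j (U m)
  · filter_upwards [hK, tendsto_natCast_atTop_atTop.eventually hU.eventually_pos] with m hKm hpos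
    refine ae_restrict_of_forall_mem measurableSet_Ioi fun y (hy : 0 < y) => ?_
    by_cases hym : y ∈ Set.Iic (m : ℝ)
    · have hquot : 0 ≤ f (y / m) / U m := div_nonneg (hf0 _ (div_pos hy (hy.trans_le hym))) hpos.le
      rw [Set.indicator_of_mem hym, norm_mul, norm_of_nonneg hquot,
        norm_of_nonneg (eval_bernsteinPolynomial_div_nonneg hy.le hym j)]
      exact mul_le_mul (eval_bernsteinPolynomial_div_le hy hym j) (hKm y hy) hquot (by positivity)
    · rw [Set.indicator_of_notMem hym, norm_zero]
      positivity
  · refine ae_restrict_of_forall_mem measurableSet_Ioi fun y hy => ?_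
    refine ((tendsto_eval_bernsteinPolynomial_div j y).mul
      (tendsto_comp_div_div hU hlim hy)).congr' ?_
    filter_upwards [tendsto_natCast_atTop_atTop.eventually_ge_atTop y] with m hm
    rw [Set.indicator_of_mem (Set.mem_Iic.2 hm)]

theorem tendsto_mixedBernstein_div {ι : Type*} [Countable ι] {q : ι → ℝ}
    (hU : IsMonotoneRegularlyVarying U α) (hα : α < 1) (hq0 : ∀ k, 0 ≤ q k) (hq1 : ∀ k, q k ≤ 1)
    (hq : Summable q) (hlim : Tendsto (fun x => tailCount q (1 / x) / U x) atTop (𝓝 D)) (r : ℕ) :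
    Tendsto (fun m : ℕ => mixedBernstein q r m / (U m / m)) atTop
      (𝓝 (D * (α * Gamma (r + 1 - α) / r.factorial))) := by
  have hbern : ∀ j : ℕ, Tendsto (fun m : ℕ => (∫ u in Set.Ioc 0 1,
      (bernsteinPolynomial ℝ m j).eval u * tailCount q u) / (U m / m)) atTop
        (𝓝 (D * (Gamma (j + 1 - α) / j.factorial))) := fun j =>
    tendsto_integral_bernsteinPolynomial_mul hU (hα.trans_le (by simp)) (tailCount_antitoneOn hq)
      (fun u _ => tailCount_nonneg u) hlim
  have hsub := ((hbern r).sub (hbern (r + 1))).const_mul (r + 1 : ℝ)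
  have hrec : Gamma ((r + 1 : ℕ) + 1 - α) = (r + 1 - α) * Gamma (r + 1 - α) := by
    rw [← Gamma_add_one (by linarith [(Nat.cast_nonneg r : (0 : ℝ) ≤ r)])]
    push_cast
    ring_nf
  have hvalue : (r + 1 : ℝ) * (D * (Gamma (r + 1 - α) / r.factorial) -
      D * (Gamma ((r + 1 : ℕ) + 1 - α) / (r + 1).factorial)) =
        D * (α * Gamma (r + 1 - α) / r.factorial) := by
    rw [hrec, Nat.factorial_succ]
    push_cast
    field_simp
    ring
  rw [hvalue] at hsub
  refine hsub.congr fun m => ?_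
  rw [mixedBernstein_eq hq0 hq1 hq, ← sub_div, mul_div_assoc]

end Abelian

section Concentration

open Topology Asymptotics

lemma abs_sub_le_add_mul_sq {g x n c δ ε B R E : ℝ} (hδ : 0 < δ) (hε : 0 ≤ ε) (hR : 0 < R)
    (hn : 0 < n) (hg : |g| ≤ B) (hclose : |x / n - c| ≤ δ → |g / R - E| ≤ ε) :
    |g / R - E| ≤ ε + (B / R + |E|) / (δ * n) ^ 2 * (x - c * n) ^ 2 := by
  have hB : 0 ≤ B := (abs_nonneg g).trans hg
  rcases le_or_gt |x / n - c| δ with hx | hx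
  · exact (hclose hx).trans (le_add_of_nonneg_right (by positivity))
  have hfar : (δ * n) ^ 2 ≤ (x - c * n) ^ 2 := by
    have hscale : x - c * n = (x / n - c) * n := by field_simp
    rw [hscale, mul_pow, mul_pow, ← sq_abs (x / n - c)]
    gcongr
  calc |g / R - E| ≤ |g / R| + |E| := abs_sub _ _
    _ ≤ B / R + |E| := by
      rw [abs_div, abs_of_pos hR]
      gcongr
    _ ≤ (B / R + |E|) / (δ * n) ^ 2 * (x - c * n) ^ 2 := by
      rw [div_mul_eq_mul_div, le_div_iff₀ (by positivity)]
      gcongr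
    _ ≤ ε + (B / R + |E|) / (δ * n) ^ 2 * (x - c * n) ^ 2 := le_add_of_nonneg_left hε

variable {U : ℝ → ℝ} {α : ℝ} {G : ℕ → ℝ} {D : ℝ}

namespace IsMonotoneRegularlyVarying

lemma isBigO_id (hU : IsMonotoneRegularlyVarying U α) (hα : α < 1) : U =O[atTop] id := by
  obtain ⟨β, hβ, hβ1⟩ := exists_between (max_lt hα one_pos)
  obtain ⟨hαβ, hβ0⟩ := max_lt_iff.1 hβ
  obtain ⟨x₀, hx₀, hUx₀, hpotter⟩ := ((eventually_gt_atTop 0).and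
    (hU.eventually_pos.and (hU.eventually_forall_le_rpow_mul hαβ hβ0.le))).exists
  refine IsBigO.of_bound (2 / x₀ * U x₀) ?_
  filter_upwards [hU.eventually_pos, eventually_ge_atTop x₀] with x hUx hx
  have hl : 1 ≤ x / x₀ := (one_le_div hx₀).2 hx
  calc ‖U x‖ = U (x / x₀ * x₀) := by rw [div_mul_cancel₀ _ hx₀.ne', Real.norm_of_nonneg hUx.le]
    _ ≤ (2 * (x / x₀)) ^ β * U x₀ := hpotter _ hl
    _ ≤ 2 * (x / x₀) * U x₀ := by
      gcongr
      exact Real.rpow_le_self_of_one_le (by linarith) hβ1.le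
    _ = 2 / x₀ * U x₀ * ‖id x‖ := by
      rw [id, Real.norm_of_nonneg (hx₀.le.trans hx)]
      ring

lemma exists_forall_abs_le (hU : IsMonotoneRegularlyVarying U α) (hα : α < 1)
    (hG : Tendsto (fun k : ℕ => G k / (U k / k)) atTop (𝓝 D)) : ∃ B, ∀ m, |G m| ≤ B := by
  have hUone : (fun k : ℕ => U k / k) =O[atTop] fun _ => (1 : ℝ) := by
    refine (((hU.isBigO_id hα).comp_tendsto tendsto_natCast_atTop_atTop).mul
      (isBigO_refl (fun k : ℕ => (k : ℝ)⁻¹) atTop)).trans (IsBigO.of_bound 1 ?_)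
    filter_upwards [eventually_gt_atTop 0] with k hk
    simp [hk.ne']
  have hGone : G =O[atTop] fun _ => (1 : ℝ) := by
    refine (((hG.isBigO_one ℝ).mul hUone).congr' ?_ (by simp)).trans (isBigO_refl _ _)
    filter_upwards [eventually_gt_atTop 0,
      tendsto_natCast_atTop_atTop.eventually hU.eventually_pos] with k hk hUk
    field_simp
  simpa using isBigO_one_nat_atTop_iff.1 hGone

lemma exists_eventually_forall_abs_sub_le (hU : IsMonotoneRegularlyVarying U α)
    (hG : Tendsto (fun k : ℕ => G k / (U k / k)) atTop (𝓝 D)) {c : ℝ} (hc : 0 < c) {ε : ℝ}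
    (hε : 0 < ε) : ∃ δ > 0, ∀ᶠ n : ℕ in atTop, ∀ m : ℕ, |(m : ℝ) / n - c| ≤ δ →
      |G m / (U n / n) - D * c ^ (α - 1)| ≤ ε := by
  have hlim := hU.tendsto_div_div_of_tendsto (n := Prod.fst) (m := Prod.snd)
    (F := comap Prod.fst atTop ⊓ comap (fun z : ℕ × ℕ => (z.2 : ℝ) / z.1) (𝓝 c)) hc
    (tendsto_comap.mono_left inf_le_left) (tendsto_comap.mono_left inf_le_right) hG
  obtain ⟨⟨n₀, δ⟩, ⟨-, hδ⟩, hsub⟩ := ((atTop_basis.comap _).inf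
    (Metric.nhds_basis_closedBall.comap _)).eventually_iff.1
    (hlim.eventually (Metric.closedBall_mem_nhds _ hε))
  refine ⟨δ, hδ, (eventually_ge_atTop n₀).mono fun n hn m hm => ?_⟩
  simpa [Real.dist_eq] using @hsub (n, m) ⟨hn, by simpa [Real.dist_eq] using hm⟩

-- Away from `c * n` the bounded function `G` is compared with `(m - c * n) ^ 2`; the price is
-- negligible because `n * (U n / n) → ∞`.
lemma exists_eventually_abs_sub_le_add_mul_sq (hU : IsMonotoneRegularlyVarying U α)
    (hα : α ∈ Set.Ioo 0 1) (hG : Tendsto (fun k : ℕ => G k / (U k / k)) atTop (𝓝 D)) {c : ℝ}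
    (hc : 0 < c) {ε : ℝ} (hε : 0 < ε) :
    ∃ κ : ℕ → ℝ, Tendsto (fun n => κ n * (n + 1)) atTop (𝓝 0) ∧ ∀ᶠ n in atTop, 0 ≤ κ n ∧
      ∀ m : ℕ, |G m / (U n / n) - D * c ^ (α - 1)| ≤ ε + κ n * (m - c * n) ^ 2 := by
  obtain ⟨B, hB⟩ := hU.exists_forall_abs_le hα.2 hG
  obtain ⟨δ, hδ, hclose⟩ := hU.exists_eventually_forall_abs_sub_le hG hc hε
  have hB0 : 0 ≤ B := (abs_nonneg _).trans (hB 0)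
  have hpos := tendsto_natCast_atTop_atTop.eventually hU.eventually_pos
  refine ⟨fun n => (B / (U n / n) + |D * c ^ (α - 1)|) / (δ * n) ^ 2, ?_, ?_⟩
  · have hUinv : Tendsto (fun n : ℕ => (U n)⁻¹) atTop (𝓝 0) :=
      ((hU.tendsto_atTop hα.1).comp tendsto_natCast_atTop_atTop).inv_tendsto_atTop
    have hinv : Tendsto (fun n : ℕ => (n : ℝ)⁻¹) atTop (𝓝 0) := tendsto_inv_atTop_nhds_zero_nat
    have hlim := (((hUinv.const_mul B).add (hinv.const_mul |D * c ^ (α - 1)|)).mul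
      (hinv.const_add 1)).div_const (δ ^ 2)
    rw [mul_zero, mul_zero, add_zero, zero_mul, zero_div] at hlim
    refine hlim.congr' ?_
    filter_upwards [eventually_gt_atTop 0, hpos] with n hn hUn
    field_simp
  · filter_upwards [eventually_gt_atTop 0, hpos, hclose] with n hn hUn hclose
    have hn' : (0 : ℝ) < n := Nat.cast_pos.2 hn
    exact ⟨by positivity, fun m =>
      abs_sub_le_add_mul_sq hδ hε.le (div_pos hUn hn') hn' (hB m) (hclose m)⟩

end IsMonotoneRegularlyVarying

open ProbabilityTheory Matrix

variable {Ω : Type*} [MeasurableSpace Ω] {P : Measure Ω}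

lemma abs_setIntegral_div_sub_le [IsProbabilityMeasure P] {s : Set Ω} {N : Ω → ℕ} {κ μ : ℝ}
    {R E ε : ℝ} (hG : ∀ m : ℕ, |G m / R - E| ≤ ε + κ * (m - μ) ^ 2)
    (hN : AEMeasurable N P) (hint : Integrable (fun ω => ((N ω : ℝ) - μ) ^ 2) P) :
    |(∫ ω in s, G (N ω) ∂P) / R - P.real s * E| ≤ ε + κ * ∫ ω, ((N ω : ℝ) - μ) ^ 2 ∂P := by
  have hbound : Integrable (fun ω => ε + κ * ((N ω : ℝ) - μ) ^ 2) P :=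
    (integrable_const ε).add (hint.const_mul κ)
  have hdiff : Integrable (fun ω => G (N ω) / R - E) P := by
    refine hbound.mono' ?_ (.of_forall fun ω => hG (N ω))
    exact ((measurable_of_countable fun m : ℕ => G m / R - E).comp_aemeasurable
      hN).aestronglyMeasurable
  have hG_int : Integrable (fun ω => G (N ω) / R) P :=
    (hdiff.add (integrable_const E)).congr (.of_forall fun _ => sub_add_cancel _ _)
  calc |(∫ ω in s, G (N ω) ∂P) / R - P.real s * E| = |∫ ω in s, (G (N ω) / R - E) ∂P| := by
        rw [integral_sub hG_int.integrableOn (integrable_const E), setIntegral_const, smul_eq_mul,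
          integral_div]
    _ ≤ ∫ ω in s, |G (N ω) / R - E| ∂P := abs_integral_le_integral_abs
    _ ≤ ∫ ω, |G (N ω) / R - E| ∂P :=
        setIntegral_le_integral hdiff.abs (.of_forall fun _ => abs_nonneg _)
    _ ≤ ∫ ω, (ε + κ * ((N ω : ℝ) - μ) ^ 2) ∂P :=
        integral_mono hdiff.abs hbound fun ω => hG (N ω)
    _ = ε + κ * ∫ ω, ((N ω : ℝ) - μ) ^ 2 ∂P := by
        rw [integral_add (integrable_const ε) (hint.const_mul κ), integral_const_mul]
        simp

theorem IsMonotoneRegularlyVarying.tendsto_setIntegral_div [IsProbabilityMeasure P]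
    (hU : IsMonotoneRegularlyVarying U α) (hα : α ∈ Set.Ioo 0 1)
    (hG : Tendsto (fun k : ℕ => G k / (U k / k)) atTop (𝓝 D)) {N : ℕ → Ω → ℕ} {c K : ℝ}
    (hc : 0 < c) (hN : ∀ n, AEMeasurable (N n) P)
    (hint : ∀ n, Integrable (fun ω => (N n ω - c * n) ^ 2) P)
    (hvar : ∀ n : ℕ, ∫ ω, (N n ω - c * n) ^ 2 ∂P ≤ K * (n + 1)) {s : ℕ → Set Ω} {q : ℝ}
    (hs : Tendsto (fun n => P.real (s n)) atTop (𝓝 q)) :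
    Tendsto (fun n : ℕ => (∫ ω in s n, G (N n ω) ∂P) / (U n / n)) atTop
      (𝓝 (q * (D * c ^ (α - 1)))) := by
  suffices hdiff : Tendsto (fun n : ℕ => (∫ ω in s n, G (N n ω) ∂P) / (U n / n) -
      P.real (s n) * (D * c ^ (α - 1))) atTop (𝓝 0) by
    simpa using hdiff.add (hs.mul_const (D * c ^ (α - 1)))
  refine Metric.tendsto_nhds.2 fun ε hε => ?_
  obtain ⟨κ, hκ, hGκ⟩ := hU.exists_eventually_abs_sub_le_add_mul_sq hα hG hc (half_pos hε)
  have hκK := hκ.mul_const K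
  rw [zero_mul] at hκK
  filter_upwards [hGκ, hκK.eventually_lt_const (half_pos hε)] with n ⟨hκ0, hGn⟩ hsmall
  rw [Real.dist_0_eq_abs]
  calc _ ≤ ε / 2 + κ n * ∫ ω, (N n ω - c * n) ^ 2 ∂P :=
        abs_setIntegral_div_sub_le hGn (hN n) (hint n)
    _ ≤ ε / 2 + κ n * (K * (n + 1)) := by gcongr; exact hvar n
    _ < ε := by linarith [mul_right_comm (κ n) ((n : ℝ) + 1) K, mul_assoc (κ n) K ((n : ℝ) + 1)]

variable {A : Type*} [Fintype A] [MeasurableSpace A] [MeasurableSingletonClass A]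

lemma integral_eq_sum_setIntegral_eq {Y : Ω → A} (hY : AEMeasurable Y P) {F : Ω → A → ℝ}
    (hF : Integrable (fun ω => F ω (Y ω)) P) :
    ∫ ω, F ω (Y ω) ∂P = ∑ a, ∫ ω in {ω | Y ω = a}, F ω a ∂P := by
  have hnull : ∀ a, NullMeasurableSet {ω | Y ω = a} P := fun a =>
    hY.nullMeasurableSet_preimage (measurableSet_singleton a)
  have hcover : ⋃ a, {ω | Y ω = a} = Set.univ :=
    Set.iUnion_eq_univ_iff.2 fun ω => ⟨Y ω, rfl⟩
  rw [← setIntegral_univ, ← hcover, integral_iUnion_ae hnull ?_ hF.integrableOn, tsum_fintype]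
  · exact sum_congr rfl fun a _ => setIntegral_congr_fun₀ (hnull a)
      fun ω (hω : Y ω = a) => congrArg (F ω) hω
  · exact fun a b hab => (Set.disjoint_left.2 fun ω ha hb => hab (ha.symm.trans hb)).aedisjoint

variable [DecidableEq A] {Q : Matrix A A ℝ} {η π : A → ℝ} {X : ℕ → Ω → A}

namespace IsMarkovChain

lemma integrable_comp_visits [IsFiniteMeasure P] (hX : IsMarkovChain P X Q η) (n : ℕ)
    (F : A → (A → ℕ) → ℝ) : Integrable (fun ω => F (X n ω) (visits (fun i => X i ω) n)) P := by
  have hvisits : ∀ ω, visits (fun i => X i ω) n =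
      fun a => ∑ i : Fin n, if X i ω = a then 1 else 0 := fun ω => funext fun a =>
    (Fin.sum_univ_eq_sum_range (fun i => if X i ω = a then 1 else 0) n).symm
  simp only [hvisits]
  exact hX.integrable_comp_path n fun x => F (x (Fin.last n))
    fun a => ∑ i : Fin n, if x i.castSucc = a then 1 else 0

theorem tendsto_integral_comp_visits_div [Nonempty A] [IsProbabilityMeasure P]
    (hX : IsMarkovChain P X Q η) (hQ : Q ∈ rowStochastic ℝ A) (hη : η ∈ stdSimplex ℝ A)
    (hprim : Q.IsPrimitive) (hπpos : ∀ a, 0 < π a) (hπ : ∑ a, π a = 1) (hstat : π ᵥ* Q = π)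
    (hU : IsMonotoneRegularlyVarying U α) (hα : α ∈ Set.Ioo 0 1) {G : A → ℕ → ℝ} {D : A → ℝ}
    (hG : ∀ a, Tendsto (fun k : ℕ => G a k / (U k / k)) atTop (𝓝 (D a))) :
    Tendsto (fun n : ℕ => (∫ ω, G (X n ω) (visits (fun i => X i ω) n (X n ω)) ∂P) / (U n / n))
      atTop (𝓝 (∑ a, π a ^ α * D a)) := by
  have hsplit : ∀ n, ∫ ω, G (X n ω) (visits (fun i => X i ω) n (X n ω)) ∂P =
      ∑ a, ∫ ω in {ω | X n ω = a}, G a (visits (fun i => X i ω) n a) ∂P := fun n =>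
    integral_eq_sum_setIntegral_eq (hX.aemeasurable n)
      (F := fun ω a => G a (visits (fun i => X i ω) n a))
      (hX.integrable_comp_visits n fun a v => G a (v a))
  simp only [hsplit, sum_div]
  refine tendsto_finsetSum _ fun a _ => ?_
  have hval : π a ^ α * D a = π a * (D a * π a ^ (α - 1)) := by
    rw [Real.rpow_sub_one (hπpos a).ne']
    field_simp [(hπpos a).ne']
  obtain ⟨K, hK⟩ := hX.exists_forall_integral_visits_sub_sq_le hQ hη hprim hπ hstat a
  rw [hval]
  exact hU.tendsto_setIntegral_div hα (hG a) (hπpos a) (fun n => hX.aemeasurable_visits n a)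
    (fun n => hX.integrable_comp_visits n fun _ v => (v a - π a * n) ^ 2) hK
    (hX.tendsto_measureReal_eq hQ hη hprim hπ hstat a)

end IsMarkovChain

end Concentration

section RatioLimit

open Topology ProbabilityTheory Matrix

variable {α C : ℝ} {ℓ : ℝ → ℝ}

lemma tendsto_div_of_tendsto_div {κ : Type*} {F : Filter κ} {f g h : κ → ℝ} {a b : ℝ}
    (hf : Tendsto (fun x => f x / h x) F (𝓝 a)) (hg : Tendsto (fun x => g x / h x) F (𝓝 b))
    (hb : b ≠ 0) : Tendsto (fun x => f x / g x) F (𝓝 (a / b)) := by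
  refine (hf.div hg hb).congr' ?_
  filter_upwards [hg.eventually_ne hb] with x hx
  exact div_div_div_cancel_right₀ (div_ne_zero_iff.1 hx).2 _ _

lemma isMonotoneRegularlyVarying_of_tendsto_div {U : ℝ → ℝ} (hmono : MonotoneOn U (Set.Ioi 0))
    (hU0 : ∀ x, 0 ≤ U x) (hsv : SlowlyVarying ℓ) (hC : C ≠ 0)
    (hU : Tendsto (fun x => U x / (x ^ α * ℓ x)) atTop (𝓝 C)) :
    IsMonotoneRegularlyVarying U α := by
  have hne : ∀ᶠ x in atTop, U x ≠ 0 ∧ ℓ x ≠ 0 := by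
    filter_upwards [hU.eventually_ne hC] with x hx
    simp_all
  refine ⟨hmono, hne.mono fun x hx => (hU0 x).lt_of_ne' hx.1, fun c hc => ?_⟩
  have hscale : Tendsto (fun x : ℝ => c * x) atTop atTop := tendsto_id.const_mul_atTop hc
  have hlim := (((hU.comp hscale).div hU hC).mul (hsv c hc)).const_mul (c ^ α)
  rw [div_self hC, mul_one, mul_one] at hlim
  refine hlim.congr' ?_
  filter_upwards [eventually_gt_atTop 0, hne, hscale.eventually hne] with x hx ⟨hUx, hℓx⟩ ⟨_, hℓcx⟩
  have hxα := (Real.rpow_pos_of_pos hx α).ne'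
  have hcα := (Real.rpow_pos_of_pos hc α).ne'
  simp only [Function.comp_apply, Pi.div_apply, Real.mul_rpow hc.le hx.le]
  field_simp

lemma tendsto_comp_one_div_div_rpow_mul {ν : ℝ → ℝ}
    (hν : Tendsto (fun ε => ν ε / (ε ^ (-α) * ℓ (1 / ε))) (𝓝[>] 0) (𝓝 C)) :
    Tendsto (fun x => ν (1 / x) / (x ^ α * ℓ x)) atTop (𝓝 C) := by
  refine (hν.comp tendsto_inv_atTop_nhdsGT_zero).congr' ?_
  filter_upwards [eventually_gt_atTop 0] with x hx
  simp [Real.inv_rpow hx.le, Real.rpow_neg hx.le]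

lemma tendsto_ite_lt_rpow_mul_div {U : ℝ → ℝ} (hC : C ≠ 0)
    (hU : Tendsto (fun x => U x / (x ^ α * ℓ x)) atTop (𝓝 C)) (r : ℕ) :
    Tendsto (fun m : ℕ => (if r < m then (m : ℝ) ^ (-(1 - α)) * ℓ m else 0) / (U m / m)) atTop
      (𝓝 C⁻¹) := by
  refine ((hU.comp tendsto_natCast_atTop_atTop).inv₀ hC).congr' ?_
  filter_upwards [eventually_gt_atTop r] with m hm
  have hm0 : (0 : ℝ) < m := Nat.cast_pos.2 (r.zero_le.trans_lt hm)
  rw [if_pos hm, neg_sub, Real.rpow_sub_one hm0.ne']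
  simp only [Function.comp_apply]
  field_simp

lemma sum_mul_div_mul_div_sum_mul_inv {A : Type*} [Fintype A] (w D : A → ℝ) {c : ℝ} (hc : c ≠ 0)
    (g : ℝ) : (∑ a, w a * (D a / c * g)) / ∑ a, w a * c⁻¹ =
      (∑ a, w a * (D a * g)) / ∑ a, w a := by
  have hnum : ∑ a, w a * (D a / c * g) = (∑ a, w a * (D a * g)) * c⁻¹ := by
    rw [sum_mul]
    exact sum_congr rfl fun a _ => by ring
  rw [hnum, ← sum_mul, mul_div_mul_right _ _ (inv_ne_zero hc)]

lemma isMonotoneRegularlyVarying_tailCount {ι : Type*} {q : ι → ℝ} (hq : Summable q)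
    (hsv : SlowlyVarying ℓ) (hC : C ≠ 0)
    (hlim : Tendsto (fun x => tailCount q (1 / x) / (x ^ α * ℓ x)) atTop (𝓝 C)) :
    IsMonotoneRegularlyVarying (fun x => tailCount q (1 / x)) α := by
  refine isMonotoneRegularlyVarying_of_tendsto_div (fun x hx y hy hxy => ?_)
    (fun x => tailCount_nonneg _) hsv hC hlim
  exact tailCount_antitoneOn hq (Set.mem_Ioi.2 (one_div_pos.2 hy))
    (Set.mem_Ioi.2 (one_div_pos.2 hx)) (one_div_le_one_div_of_le hx hxy)

variable {A ι : Type*} [Fintype A] [DecidableEq A] [MeasurableSpace A] [MeasurableSingletonClass A]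
  [Countable ι] [DecidableEq ι] [MeasurableSpace ι] [MeasurableSingletonClass ι]

theorem regime_switching_asymptotics_ratio_general {Ω : Type*} [MeasurableSpace Ω] {P : Measure Ω}
    [IsProbabilityMeasure P] {Z : ℕ → Ω → A × ι} {Q : Matrix A A ℝ} {π η : A → ℝ} {p : A → PMF ι}
    (hZ : IsRegimeSwitching P Z Q η p) (hQ : Q ∈ rowStochastic ℝ A) (hη : η ∈ stdSimplex ℝ A)
    (hprim : Q.IsPrimitive) (hπpos : ∀ a, 0 < π a) (hπ : ∑ a, π a = 1) (hstat : π ᵥ* Q = π)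
    (hα : α ∈ Set.Ioo 0 1) (hsv : SlowlyVarying ℓ) {C : A → ℝ} (hC : ∃ a, C a ≠ 0)
    (hRV : ∀ a, Tendsto (fun ε => tailCount (fun k => (p a k).toReal) ε / (ε ^ (-α) * ℓ (1 / ε)))
      (𝓝[>] 0) (𝓝 (C a))) (r : ℕ) :
    Tendsto (fun n : ℕ => P.real {ω | visits (fun i => Z i ω) n (Z n ω) = r} /
      ∫ ω, (if r < visits (fun i => (Z i ω).1) n (Z n ω).1 then
        (visits (fun i => (Z i ω).1) n (Z n ω).1 : ℝ) ^ (-(1 - α)) *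
          ℓ (visits (fun i => (Z i ω).1) n (Z n ω).1) else 0) ∂P) atTop
      (𝓝 ((∑ a, π a ^ α * (C a * (α * Real.Gamma (r + 1 - α) / r.factorial))) /
        ∑ a, π a ^ α)) := by
  obtain ⟨a₀, ha₀⟩ := hC
  have : Nonempty A := ⟨a₀⟩
  have hq : ∀ a, Summable fun k => (p a k).toReal := fun a =>
    ENNReal.summable_toReal (p a).tsum_coe_ne_top
  have htail := fun a => tendsto_comp_one_div_div_rpow_mul (hRV a)
  have hU := isMonotoneRegularlyVarying_tailCount (hq a₀) hsv ha₀ (htail a₀)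
  have hX := hZ.isMarkovChain_fst
  have hnum := hX.tendsto_integral_comp_visits_div hQ hη hprim hπpos hπ hstat hU hα fun a =>
    tendsto_mixedBernstein_div hU hα.2 (fun _ => toReal_nonneg)
      (fun k => toReal_le_of_le_ofReal zero_le_one (by simpa using (p a).coe_le_one k))
      (hq a) (tendsto_div_of_tendsto_div (htail a) (htail a₀) ha₀) r
  have hden := hX.tendsto_integral_comp_visits_div hQ hη hprim hπpos hπ hstat hU hα fun _ =>
    tendsto_ite_lt_rpow_mul_div ha₀ (htail a₀) r
  have hsum : 0 < ∑ a, π a ^ α :=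
    sum_pos (fun a _ => Real.rpow_pos_of_pos (hπpos a) α) univ_nonempty
  rw [← sum_mul_div_mul_div_sum_mul_inv _ _ ha₀]
  simp only [hZ.measureReal_visits_eq hQ hη]
  refine tendsto_div_of_tendsto_div hnum hden ?_
  rw [← sum_mul]
  exact mul_ne_zero hsum.ne' (inv_ne_zero ha₀)

end RatioLimit

/-- Theorem 5.1, second limit, case α ∈ (0,1): under the hypotheses of the
regime switching asymptotic theorem,
`P_η{𝓛_n = r}/E_η[1{L_n>r} L_n^{−(1−α)}ℓ(L_n)] → (Σ_a π_a^α C(a) αΓ(r+1−α)/r!)/(Σ_a π_a^α)`.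
(Indexed from 0: `𝓛_n = Σ_{i<n} 1{Z_i = Z_n}`, `L_n = Σ_{i<n} 1{X_i = X_n}`.) -/
theorem regime_switching_asymptotics_ratio {A : Type*} [Fintype A] [Nonempty A]
    [DecidableEq A]
    {Ω : Type*} [MeasurableSpace Ω] (P : Measure Ω) [IsProbabilityMeasure P]
    (Z : ℕ → Ω → A × ℕ)
    (Q : A → A → ℝ) (π η : A → ℝ)
    (hQnn : ∀ x y, 0 ≤ Q x y) (hQ : ∀ x, ∑ y, Q x y = 1)
    (hprim : ∃ t : ℕ, ∀ a b, 0 < mpow Q t a b)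
    (hπpos : ∀ x, 0 < π x) (hπsum : ∑ x, π x = 1)
    (hstat : ∀ x, ∑ y, π y * Q y x = π x)
    (hηnn : ∀ a, 0 ≤ η a) (hηsum : ∑ a, η a = 1)
    (p : A → ℕ → ℝ) (hpnn : ∀ a k, 0 ≤ p a k) (hp : ∀ a, HasSum (p a) 1)
    (hZ : ∀ (n : ℕ) (a : ℕ → A) (k : ℕ → ℕ),
      P (⋂ i ∈ Finset.range (n + 1), {ω | Z i ω = (a i, k i)}) =
        ENNReal.ofReal ((η (a 0) * ∏ i ∈ Finset.range n, Q (a i) (a (i + 1))) *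
          ∏ i ∈ Finset.range (n + 1), p (a i) (k i)))
    (α : ℝ) (hα : α ∈ Set.Ioo (0 : ℝ) 1)
    (ℓ : ℝ → ℝ) (hsv : SlowlyVarying ℓ)
    (hbdd : ∀ b : ℝ, 1 ≤ b → ∃ m M : ℝ, 0 < m ∧
      ∀ x ∈ Set.Icc (1 : ℝ) b, m ≤ ℓ x ∧ ℓ x ≤ M)
    (C : A → ℝ) (hCnn : ∀ a, 0 ≤ C a) (hCne : ∃ a, C a ≠ 0)
    (hRV : ∀ a : A, Tendsto (fun ε : ℝ => nuR p a ε / (ε ^ (-α) * ℓ (1 / ε)))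
      (nhdsWithin 0 (Set.Ioi 0)) (nhds (C a)))
    (r : ℕ) :
    Tendsto (fun n : ℕ =>
        (P {ω | (∑ i ∈ Finset.range n, if Z i ω = Z n ω then 1 else 0 : ℕ) = r}).toReal /
          (∫ ω,
            (if r < (∑ i ∈ Finset.range n, if (Z i ω).1 = (Z n ω).1 then 1 else 0 : ℕ) then
              ((∑ i ∈ Finset.range n, if (Z i ω).1 = (Z n ω).1 then 1 else 0 : ℕ) : ℝ)
                  ^ (-(1 - α)) *
                ℓ ((∑ i ∈ Finset.range n, if (Z i ω).1 = (Z n ω).1 then 1 else 0 : ℕ) : ℝ)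
            else 0) ∂P))
      atTop (nhds ((∑ a, π a ^ α * (C a *
          (α * Real.Gamma (r + 1 - α) / (r.factorial : ℝ)))) /
        (∑ a, π a ^ α))) := by
  choose p' hp' using fun a => exists_pmf_toReal_eq (hpnn a) (hp a)
  obtain rfl : (fun a k => (p' a k).toReal) = p := funext₂ hp'
  have hQ' : Matrix.of Q ∈ Matrix.rowStochastic ℝ A :=
    Matrix.mem_rowStochastic_iff_sum.2 ⟨hQnn, hQ⟩
  let _ : MeasurableSpace A := ⊤
  exact regime_switching_asymptotics_ratio_general
    (isRegimeSwitching_of_measure_biInter hQ' ⟨hηnn, hηsum⟩ hZ) hQ' ⟨hηnn, hηsum⟩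
    (hprim.elim fun _ => isPrimitive_of_mpow_pos hQ') hπpos hπsum (funext hstat) hα hsv hCne hRV r
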